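/- Let k ≥ 1 be a fixed integer. Suppose p_s = o(1), K_n ≥ 2 for all sufficiently large n, and p_e = (ln n + (k−1)·ln ln n + α_n)/n with lim_{n→∞} α_n = −∞. Then for any two distinct nodes v_x, v_y of 𝔾_on(n,K_n,P_n,p_n): (a) if there exists ε > 0 with n·p_e > ε for all sufficiently large n, then for any fixed nonnegative integer ℓ, P[D_{x,ℓ} ∩ D_{y,ℓ}] ∼ (ℓ!)^{−2}·(p_e·n)^{2ℓ}·e^{−2·p_e·n}; (b) P[D_{x,0} ∩ D_{y,0}] ∼ e^{−2·p_e·n}. -/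

import Mathlib

open MeasureTheory Filter Asymptotics
open scoped ENNReal

noncomputable section

/-- Key rings: `K`-element subsets of a key pool of size `P`. -/
abbrev KeyRing (P K : ℕ) : Type := {s : Finset (Fin P) // s.card = K}

instance (P K : ℕ) : MeasurableSpace (KeyRing P K) := ⊤

/-- The uniform probability measure on key rings. -/
def uniformKeyMeasure (P K : ℕ) : Measure (KeyRing P K) :=
  (Fintype.card (KeyRing P K) : ℝ≥0∞)⁻¹ • (Measure.count : Measure (KeyRing P K))

/-- The Bernoulli measure with parameter `p` on `Bool`. -/
def bern (p : ℝ) : Measure Bool :=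
  ENNReal.ofReal p • Measure.dirac true + ENNReal.ofReal (1 - p) • Measure.dirac false

/-- Sample space underlying `𝔾_on(n, K, P, p)`: independent key rings for the `n`
nodes together with independent on/off channel states for each pair of nodes. -/
abbrev GonSpace (n K P : ℕ) : Type :=
  (Fin n → KeyRing P K) × (Sym2 (Fin n) → Bool)

/-- The probability measure of the model `𝔾_on(n, K, P, p)`: the key rings of the
`n` nodes are independent and uniform, and the channels are independent
Bernoulli(`p`) variables, independent of the key rings. -/
def gonMeasure (n K P : ℕ) (p : ℝ) : Measure (GonSpace n K P) :=
  (Measure.pi fun _ : Fin n => uniformKeyMeasure P K).prod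
    (Measure.pi fun _ : Sym2 (Fin n) => bern p)

/-- The random graph `𝔾_on`: an edge is present iff the key rings intersect and the
channel between the two nodes is on. -/
def gonGraph {n K P : ℕ} (ω : GonSpace n K P) : SimpleGraph (Fin n) where
  Adj i j := i ≠ j ∧ ((ω.1 i).1 ∩ (ω.1 j).1).Nonempty ∧ ω.2 s(i, j) = true
  symm := by
    constructor
    rintro i j ⟨h1, h2, h3⟩
    exact ⟨h1.symm, by rwa [Finset.inter_comm], by rwa [Sym2.eq_swap]⟩
  loopless := ⟨fun i h => h.1 rfl⟩

/-- The random key graph `G(n, K, P)`: an edge is present iff the key rings intersect. -/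
def rkgGraph {n K P : ℕ} (ω : Fin n → KeyRing P K) : SimpleGraph (Fin n) where
  Adj i j := i ≠ j ∧ ((ω i).1 ∩ (ω j).1).Nonempty
  symm := by
    constructor
    rintro i j ⟨h1, h2⟩
    exact ⟨h1.symm, by rwa [Finset.inter_comm]⟩
  loopless := ⟨fun i h => h.1 rfl⟩

/-- The probability measure of the random key graph model. -/
def rkgMeasure (n K P : ℕ) : Measure (Fin n → KeyRing P K) :=
  Measure.pi fun _ : Fin n => uniformKeyMeasure P K

/-- Degree of a vertex. -/
def gDeg {V : Type*} (G : SimpleGraph V) (v : V) : ℕ := Nat.card {w // G.Adj v w}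

/-- Minimum vertex degree. -/
def minDeg {V : Type*} (G : SimpleGraph V) : ℕ := sInf (Set.range (gDeg G))

/-- A graph is `k`-connected if it remains connected after the removal of any
`k - 1` of its vertices. -/
def KConnected {V : Type*} (G : SimpleGraph V) (k : ℕ) : Prop :=
  ∀ S : Finset V, S.card ≤ k - 1 → (G.induce ((S : Set V)ᶜ)).Connected

/-- Vertex connectivity: the least number of vertices whose deletion disconnects
the graph. -/
def vertexConn {V : Type*} (G : SimpleGraph V) : ℕ :=
  sInf {m | ∃ S : Finset V, S.card = m ∧ ¬ (G.induce ((S : Set V)ᶜ)).Connected}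

/-- `p_s`: the probability that two key rings share at least one key. -/
def psf (K P : ℕ) : ℝ :=
  if 2 * K ≤ P then 1 - (Nat.choose (P - K) K : ℝ) / (Nat.choose P K : ℝ) else 1

/-- `p_e = p · p_s`: the probability of an edge in `𝔾_on`. -/
def pef (K P : ℕ) (p : ℝ) : ℝ := p * psf K P

/-- The event `D_{x,ℓ}` that the node with index `x` has degree exactly `ℓ`. -/
def degEvent (n K P : ℕ) (x ℓ : ℕ) : Set (GonSpace n K P) :=
  {ω | ∃ hx : x < n, gDeg (gonGraph ω) ⟨x, hx⟩ = ℓ}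

/-- The event `E_{xy}` that the edge between the nodes with indices `x`, `y` is present. -/
def edgeEvent (n K P : ℕ) (x y : ℕ) : Set (GonSpace n K P) :=
  {ω | ∃ (hx : x < n) (hy : y < n), (gonGraph ω).Adj ⟨x, hx⟩ ⟨y, hy⟩}

/-- The event that the key rings of nodes `x` and `y` share exactly `u` keys. -/
def interCardEvent (n K P : ℕ) (x y u : ℕ) : Set (GonSpace n K P) :=
  {ω | ∃ (hx : x < n) (hy : y < n), ((ω.1 ⟨x, hx⟩).1 ∩ (ω.1 ⟨y, hy⟩).1).card = u}

/-- The event `K_{xy}` that the key rings of nodes `x` and `y` share at least one key. -/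
def keyShareEvent (n K P : ℕ) (x y : ℕ) : Set (GonSpace n K P) :=
  {ω | ∃ (hx : x < n) (hy : y < n), ((ω.1 ⟨x, hx⟩).1 ∩ (ω.1 ⟨y, hy⟩).1).Nonempty}

/-- `r_n = min(⌊P/K⌋, ⌊n/2⌋)`. -/
def rn (n K P : ℕ) : ℕ := min (P / K) (n / 2)

/-- The threshold array `J`. -/
def Jarr (n K P : ℕ) (ε lam mu : ℝ) (i : ℕ) : ℕ :=
  if i ≤ rn n K P then max ⌊(1 + ε) * (K : ℝ)⌋₊ ⌊lam * (K : ℝ) * (i : ℝ)⌋₊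
  else ⌊mu * (P : ℝ)⌋₊

/-- The event `𝓔(J)`: some set `T` of at least two nodes has a union of key rings of
size at most `J_{|T|}`. -/
def EJ (n K P : ℕ) (ε lam mu : ℝ) : Set (GonSpace n K P) :=
  {ω | ∃ T : Finset (Fin n), 2 ≤ T.card ∧
    (T.biUnion fun i => (ω.1 i).1).card ≤ Jarr n K P ε lam mu T.card}

/-!
Condition on the key rings `s`, `t` of the two nodes. Each of the other `n - 2` nodes is then,
independently, adjacent to both of them, to only the first, to only the second, or to neither,
with probabilities `b`, `q - b`, `q - b` and `1 - 2 q + b`; here `q = p_e`, and `b` is `p_n ^ 2`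
times the probability that a random ring meets both `s` and `t`.

If `s` and `t` are disjoint then `b ≤ 2 q ^ 2`, and the two degrees are nearly independent Poisson
variables of mean `n q`; this case has probability `1 - p_s → 1`. A single common key, at most half
of a ring, raises the joint probability by a factor of order at most
`w = exp (n p_n q / (2 (1 - p_s)))`, and `s`, `t` meet with probability `p_s`. Two or more common
keys cost at most `w ^ 2` but have probability at most `2 p_s ^ 2`. The relative error is therefore
of order `z + 2 z ^ 2` with `z = p_s w`, and `z → 0` because `n q ≤ c log n` eventually for some
`c < 2`.
-/

section Counting

lemma descFactorial_mul_pow_le {a b : ℕ} (hab : a ≤ b) (d : ℕ) :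
    a.descFactorial d * b ^ d ≤ b.descFactorial d * a ^ d := by
  induction d with
  | zero => simp
  | succ d ih =>
    have h : (a - d) * b ≤ (b - d) * a := by
      rw [Nat.sub_mul, Nat.sub_mul, mul_comm b a]
      exact Nat.sub_le_sub_left (Nat.mul_le_mul_left d hab) _
    calc a.descFactorial (d + 1) * b ^ (d + 1)
        = ((a - d) * b) * (a.descFactorial d * b ^ d) := by
          rw [Nat.descFactorial_succ]; ring
      _ ≤ ((b - d) * a) * (b.descFactorial d * a ^ d) := Nat.mul_le_mul h ih
      _ = b.descFactorial (d + 1) * a ^ (d + 1) := by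
          rw [Nat.descFactorial_succ]; ring

lemma choose_mul_pow_le {a b : ℕ} (hab : a ≤ b) (d : ℕ) :
    a.choose d * b ^ d ≤ b.choose d * a ^ d := by
  have h := descFactorial_mul_pow_le hab d
  simp only [Nat.descFactorial_eq_factorial_mul_choose, mul_assoc] at h
  exact Nat.le_of_mul_le_mul_left h d.factorial_pos

lemma choose_sub_sub_mul_pow_le {n k d : ℕ} (hd : d ≤ k) (hk : k ≤ n) :
    (n - d).choose (k - d) * n ^ d ≤ n.choose k * k ^ d := by
  refine Nat.le_of_mul_le_mul_left ?_ (Nat.choose_pos (hd.trans hk))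
  calc n.choose d * ((n - d).choose (k - d) * n ^ d)
      = n.choose k * (k.choose d * n ^ d) := by
        rw [← mul_assoc, ← Nat.choose_mul hd, mul_assoc]
    _ ≤ n.choose k * (n.choose d * k ^ d) := Nat.mul_le_mul_left _ (choose_mul_pow_le hk d)
    _ = n.choose d * (n.choose k * k ^ d) := by ring

lemma choose_sub_sub_mul_factorial_le (n : ℕ) {l d : ℕ} (hd : d ≤ l) :
    (n - d).choose (l - d) * l.factorial ≤ l ^ d * n ^ (l - d) := by
  have hchoose : (n - d).choose (l - d) * (l - d).factorial ≤ n ^ (l - d) := by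
    rw [mul_comm, ← Nat.descFactorial_eq_factorial_mul_choose]
    exact (Nat.descFactorial_le_pow _ _).trans (Nat.pow_le_pow_left (Nat.sub_le _ _) _)
  have hfactorial : l.factorial ≤ (l - d).factorial * l ^ d := by
    rw [← Nat.factorial_mul_descFactorial hd]
    exact Nat.mul_le_mul_left _ (Nat.descFactorial_le_pow _ _)
  calc (n - d).choose (l - d) * l.factorial
      ≤ (n - d).choose (l - d) * ((l - d).factorial * l ^ d) := Nat.mul_le_mul_left _ hfactorial
    _ = l ^ d * ((n - d).choose (l - d) * (l - d).factorial) := by ring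
    _ ≤ l ^ d * n ^ (l - d) := Nat.mul_le_mul_left _ hchoose

lemma sub_pow_div_factorial_le_choose (n l : ℕ) :
    ((n - l : ℕ) : ℝ) ^ l / l.factorial ≤ n.choose l := by
  rw [div_le_iff₀ (by positivity), mul_comm, ← Nat.cast_mul,
    ← Nat.descFactorial_eq_factorial_mul_choose]
  exact_mod_cast (Nat.pow_le_pow_left (by lia) l).trans (Nat.pow_sub_le_descFactorial n l)

end Counting

namespace KeyRing

open Finset
open scoped BigOperators

variable {P K : ℕ}

/-- The two key rings share at least one key. -/
abbrev Meets (s t : KeyRing P K) : Prop := (s.1 ∩ t.1).Nonempty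

lemma nonempty (hKP : K ≤ P) : Nonempty (KeyRing P K) := by
  rw [← Fintype.card_pos_iff, Fintype.card_finset_len, Fintype.card_fin]
  exact Nat.choose_pos hKP

lemma card_filter (Q : Finset (Fin P) → Prop) [DecidablePred Q] :
    #{r : KeyRing P K | Q r.1} = #{r ∈ powersetCard K univ | Q r} := by
  rw [← card_map (Function.Embedding.subtype _)]
  congr 1
  ext r
  simp [and_comm]

lemma expect_indicator (Q : Finset (Fin P) → Prop) [DecidablePred Q] :
    𝔼 r : KeyRing P K, (if Q r.1 then (1 : ℝ) else 0) =
      #{r ∈ powersetCard K univ | Q r} / P.choose K := by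
  rw [Fintype.expect_eq_sum_div_card, sum_boole, card_filter, Fintype.card_finset_len,
    Fintype.card_fin]

lemma expect_subset_le (hKP : K ≤ P) (D : Finset (Fin P)) :
    𝔼 r : KeyRing P K, (if D ⊆ r.1 then (1 : ℝ) else 0) ≤ ((K : ℝ) / P) ^ #D := by
  have hchoose : (0 : ℝ) < P.choose K := by exact_mod_cast Nat.choose_pos hKP
  have hDP : #D ≤ P := by simpa using card_le_univ D
  have hpow : (0 : ℝ) < (P : ℝ) ^ #D := by
    obtain h | h := Nat.eq_zero_or_pos #D
    · simp [h]
    · have := h.trans_le hDP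
      positivity
  rw [expect_indicator, div_pow, div_le_div_iff₀ hchoose hpow]
  obtain hD | hD := le_or_gt #D K
  · rw [card_filter_powersetCard_subset _ _ _ (subset_univ _) hD, card_univ, Fintype.card_fin,
      mul_comm ((K : ℝ) ^ _)]
    exact_mod_cast choose_sub_sub_mul_pow_le hD hKP
  · rw [filter_false_of_mem fun r hr hDr => ?_, card_empty, Nat.cast_zero, zero_mul]
    · positivity
    · exact hD.not_ge ((card_le_card hDr).trans_eq (mem_powersetCard.1 hr).2)

lemma expect_indicator_le_sum_pow (hKP : K ≤ P) {ι : Type*} (T : Finset ι)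
    (D : ι → Finset (Fin P)) (Q : KeyRing P K → Prop) [DecidablePred Q]
    (hQ : ∀ r, Q r → ∃ i ∈ T, D i ⊆ r.1) :
    𝔼 r, (if Q r then (1 : ℝ) else 0) ≤ ∑ i ∈ T, ((K : ℝ) / P) ^ #(D i) := by
  calc 𝔼 r, (if Q r then (1 : ℝ) else 0)
      ≤ 𝔼 r : KeyRing P K, ∑ i ∈ T, (if D i ⊆ r.1 then (1 : ℝ) else 0) := by
        refine expect_le_expect fun r _ => ?_
        split_ifs with hr
        · obtain ⟨i, hi, hDr⟩ := hQ r hr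
          calc (1 : ℝ) = if D i ⊆ r.1 then 1 else 0 := (if_pos hDr).symm
            _ ≤ _ := single_le_sum (f := fun i => if D i ⊆ r.1 then (1 : ℝ) else 0)
                (fun j _ => by positivity) hi
        · positivity
    _ = ∑ i ∈ T, 𝔼 r : KeyRing P K, (if D i ⊆ r.1 then (1 : ℝ) else 0) := expect_sum_comm ..
    _ ≤ _ := sum_le_sum fun i _ => expect_subset_le hKP (D i)

lemma psf_eq (K P : ℕ) : psf K P = 1 - ((P - K).choose K : ℝ) / P.choose K := by
  unfold psf
  split_ifs with h
  · rfl
  · simp [Nat.choose_eq_zero_of_lt (by lia : P - K < K)]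

lemma psf_nonneg (K P : ℕ) : 0 ≤ psf K P := by
  rw [psf_eq, sub_nonneg]
  apply div_le_one_of_le₀ _ (Nat.cast_nonneg _)
  exact_mod_cast Nat.choose_le_choose K (Nat.sub_le P K)

lemma expect_not_meets (s : KeyRing P K) :
    𝔼 r, (if ¬ s.Meets r then (1 : ℝ) else 0) = 1 - psf K P := by
  have hcompl : {r ∈ powersetCard K (univ : Finset (Fin P)) | ¬ (s.1 ∩ r).Nonempty} =
      powersetCard K s.1ᶜ := by
    ext r
    simp only [mem_filter, mem_powersetCard, subset_univ, true_and, not_nonempty_iff_eq_empty,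
      ← disjoint_iff_inter_eq_empty]
    rw [and_comm, disjoint_comm, ← subset_compl_iff_disjoint_right]
  rw [expect_indicator (fun r => ¬ (s.1 ∩ r).Nonempty), hcompl, card_powersetCard, card_compl,
    Fintype.card_fin, s.2, psf_eq, sub_sub_cancel]

lemma expect_meets (hKP : K ≤ P) (s : KeyRing P K) :
    𝔼 r, (if s.Meets r then (1 : ℝ) else 0) = psf K P := by
  have := nonempty hKP
  have h := expect_not_meets s
  simp only [ite_not] at h
  have hsum : 𝔼 r, (if s.Meets r then (1 : ℝ) else 0) + 𝔼 r, (if s.Meets r then (0 : ℝ) else 1)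
      = 1 := by
    rw [← expect_add_distrib, ← Fintype.expect_const (ι := KeyRing P K) (1 : ℝ)]
    exact expect_congr rfl fun r _ => by split_ifs <;> simp
  linarith

lemma one_sub_psf_mul_le (hKP : K ≤ P) : (1 - psf K P) * (1 + (K : ℝ) ^ 2 / P) ≤ 1 := by
  obtain rfl | hP := P.eq_zero_or_pos
  · simpa using psf_nonneg K 0
  set a : ℝ := (K : ℝ) / P with ha
  have ha0 : 0 ≤ a := by positivity
  have ha1 : a ≤ 1 := div_le_one_of_le₀ (by exact_mod_cast hKP) (Nat.cast_nonneg _)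
  have hdisjoint : 1 - psf K P ≤ (1 - a) ^ K := by
    have hchoose : (0 : ℝ) < P.choose K := by exact_mod_cast Nat.choose_pos hKP
    rw [psf_eq, sub_sub_cancel, ha, one_sub_div (by positivity), div_pow,
      div_le_div_iff₀ hchoose (by positivity), ← Nat.cast_sub hKP, mul_comm (_ ^ K)]
    exact_mod_cast choose_mul_pow_le (Nat.sub_le P K) K
  have hbernoulli : 1 + (K : ℝ) ^ 2 / P ≤ (1 + a) ^ K := by
    calc 1 + (K : ℝ) ^ 2 / P = 1 + K * a := by rw [ha]; ring
      _ ≤ _ := one_add_mul_le_pow (by linarith) K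
  calc (1 - psf K P) * (1 + (K : ℝ) ^ 2 / P) ≤ (1 - a) ^ K * (1 + a) ^ K :=
        mul_le_mul hdisjoint hbernoulli (by positivity) (pow_nonneg (by linarith) _)
    _ = (1 - a ^ 2) ^ K := by rw [← mul_pow]; ring
    _ ≤ 1 := pow_le_one₀ (by nlinarith) (by nlinarith)

lemma sq_div_mul_one_sub_psf_le (hKP : K ≤ P) : (K : ℝ) ^ 2 / P * (1 - psf K P) ≤ psf K P := by
  linarith [one_sub_psf_mul_le hKP]

lemma sq_div_le_psf (hKP : K ≤ P) (h : psf K P ≤ 1 / 5) :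
    (K : ℝ) ^ 2 / P ≤ 5 / 4 * psf K P := by
  have hnonneg : 0 ≤ (K : ℝ) ^ 2 / P := by positivity
  nlinarith [sq_div_mul_one_sub_psf_le hKP]

lemma psf_pos (hKP : K ≤ P) (hK : 0 < K) : 0 < psf K P := by
  have hP : 0 < P := hK.trans_le hKP
  have hpos : 0 < (K : ℝ) ^ 2 / P := by positivity
  by_contra! h
  nlinarith [sq_div_mul_one_sub_psf_le hKP]

/-- The probability that a uniformly random key ring meets both `s` and `t`. -/
def bothProb (s t : KeyRing P K) : ℝ := 𝔼 r, if s.Meets r ∧ t.Meets r then 1 else 0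

lemma bothProb_nonneg (s t : KeyRing P K) : 0 ≤ bothProb s t :=
  expect_nonneg fun r _ => by positivity

lemma bothProb_le_psf (hKP : K ≤ P) (s t : KeyRing P K) : bothProb s t ≤ psf K P := by
  rw [← expect_meets hKP s]
  refine expect_le_expect fun r _ => ?_
  by_cases hs : s.Meets r <;> by_cases ht : t.Meets r <;> simp [hs, ht]

-- A ring meeting both `s` and `t` contains `{a, b}` for some `a ∈ s`, `b ∈ t`, possibly equal.
lemma bothProb_le (hKP : K ≤ P) (s t : KeyRing P K) :
    bothProb s t ≤ #(s.1 ∩ t.1) * ((K : ℝ) / P) + ((K : ℝ) ^ 2 / P) ^ 2 := by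
  have hdiag : #{ab ∈ s.1 ×ˢ t.1 | ab.1 = ab.2} = #(s.1 ∩ t.1) := by
    have h : {ab ∈ s.1 ×ˢ t.1 | ab.1 = ab.2} = (s.1 ∩ t.1).diag := by
      ext ⟨a, b⟩
      simp only [mem_filter, mem_product, mem_diag, mem_inter]
      grind
    rw [h, diag_card]
  have hoffdiag : (#{ab ∈ s.1 ×ˢ t.1 | ¬ ab.1 = ab.2} : ℝ) ≤ (K : ℝ) ^ 2 := by
    have h := card_filter_le (s.1 ×ˢ t.1) fun ab => ¬ ab.1 = ab.2
    rw [card_product, s.2, t.2, ← sq] at h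
    exact_mod_cast h
  calc bothProb s t ≤ ∑ ab ∈ s.1 ×ˢ t.1, ((K : ℝ) / P) ^ #{ab.1, ab.2} := by
        refine expect_indicator_le_sum_pow hKP (s.1 ×ˢ t.1) (fun ab => {ab.1, ab.2})
          (fun r => s.Meets r ∧ t.Meets r) ?_
        rintro r ⟨⟨a, ha⟩, ⟨b, hb⟩⟩
        rw [mem_inter] at ha hb
        exact ⟨(a, b), mem_product.2 ⟨ha.1, hb.1⟩, by simp [insert_subset_iff, ha.2, hb.2]⟩
    _ = ∑ ab ∈ s.1 ×ˢ t.1, (if ab.1 = ab.2 then (K : ℝ) / P else (K / P) ^ 2) := by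
        refine sum_congr rfl fun ab _ => ?_
        split_ifs with h
        · simp [h]
        · rw [card_pair h]
    _ = #(s.1 ∩ t.1) * ((K : ℝ) / P) +
          #{ab ∈ s.1 ×ˢ t.1 | ¬ ab.1 = ab.2} * (K / P : ℝ) ^ 2 := by
        rw [sum_ite, sum_const, sum_const, nsmul_eq_mul, nsmul_eq_mul, hdiag]
    _ ≤ #(s.1 ∩ t.1) * ((K : ℝ) / P) + (K : ℝ) ^ 2 * (K / P : ℝ) ^ 2 := by gcongr
    _ = _ := by ring

lemma expect_two_le_card_inter_le (hKP : K ≤ P) (s : KeyRing P K) :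
    𝔼 r : KeyRing P K, (if 2 ≤ #(s.1 ∩ r.1) then (1 : ℝ) else 0) ≤ ((K : ℝ) ^ 2 / P) ^ 2 := by
  have hcard : (#s.1.offDiag : ℝ) ≤ (K : ℝ) ^ 2 := by
    have h : #s.1.offDiag ≤ K ^ 2 := by rw [offDiag_card, s.2, sq]; exact Nat.sub_le _ _
    exact_mod_cast h
  calc 𝔼 r : KeyRing P K, (if 2 ≤ #(s.1 ∩ r.1) then (1 : ℝ) else 0)
      ≤ ∑ ab ∈ s.1.offDiag, ((K : ℝ) / P) ^ #{ab.1, ab.2} := by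
        refine expect_indicator_le_sum_pow hKP s.1.offDiag (fun ab => {ab.1, ab.2})
          (fun r => 2 ≤ #(s.1 ∩ r.1)) fun r hr => ?_
        obtain ⟨a, ha, b, hb, hab⟩ := one_lt_card.1 hr
        rw [mem_inter] at ha hb
        exact ⟨(a, b), mem_offDiag.2 ⟨ha.1, hb.1, hab⟩, by
          simp [insert_subset_iff, ha.2, hb.2]⟩
    _ = #s.1.offDiag * ((K : ℝ) / P) ^ 2 := by
        rw [sum_congr rfl fun ab hab => by rw [card_pair (mem_offDiag.1 hab).2.2], sum_const,
          nsmul_eq_mul]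
    _ ≤ (K : ℝ) ^ 2 * ((K : ℝ) / P) ^ 2 := by gcongr
    _ = _ := by ring

-- Sharing at most `θ K` keys: `θ = 0` for disjoint rings, `θ = 1/2` for rings with at most one
-- common key when `2 ≤ K`, and `θ = 1` in general.
lemma sq_mul_bothProb_le (hKP : K ≤ P) (p : ℝ) (hps : psf K P ≤ 1 / 5) {θ : ℝ} (hθ0 : 0 ≤ θ)
    (s t : KeyRing P K) (hθ : (#(s.1 ∩ t.1) : ℝ) ≤ θ * K) :
    p ^ 2 * bothProb s t ≤ θ * (p * pef K P p / (1 - psf K P)) + 2 * pef K P p ^ 2 := by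
  have hshared : #(s.1 ∩ t.1) * ((K : ℝ) / P) ≤ θ * (psf K P / (1 - psf K P)) := by
    calc #(s.1 ∩ t.1) * ((K : ℝ) / P) ≤ θ * K * (K / P) := by gcongr
      _ = θ * (K ^ 2 / P) := by ring
      _ ≤ θ * (psf K P / (1 - psf K P)) := by
        refine mul_le_mul_of_nonneg_left ?_ hθ0
        rw [le_div_iff₀ (by linarith)]
        exact sq_div_mul_one_sub_psf_le hKP
  calc p ^ 2 * bothProb s t
      ≤ p ^ 2 * (#(s.1 ∩ t.1) * ((K : ℝ) / P) + ((K : ℝ) ^ 2 / P) ^ 2) := by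
        gcongr
        exact bothProb_le hKP s t
    _ ≤ p ^ 2 * (θ * (psf K P / (1 - psf K P)) + (5 / 4 * psf K P) ^ 2) := by
        gcongr
        exact sq_div_le_psf hKP hps
    _ = θ * (p * pef K P p / (1 - psf K P)) + 25 / 16 * pef K P p ^ 2 := by
        unfold pef
        ring
    _ ≤ _ := by
        gcongr
        norm_num

end KeyRing

/-! ### Two selections from independent trials -/

section PairWeight

open Finset

/-- The probability that a trial selects the first node or not according to `c`, and the second or
not according to `d`, when it selects both with probability `b` and each one with probability
`q`. -/
def pairMass (b q : ℝ) (c d : Prop) [Decidable c] [Decidable d] : ℝ :=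
  if c then (if d then b else q - b) else if d then q - b else 1 - 2 * q + b

variable {V : Type*} [Fintype V] [DecidableEq V] {b q : ℝ} {l : ℕ} {A B : Finset V}

/-- The probability that independent trials indexed by `V`, with masses `pairMass b q`, select the
first node exactly on `A` and the second exactly on `B`. -/
def pairWeight (b q : ℝ) (A B : Finset V) : ℝ := ∏ i, pairMass b q (i ∈ A) (i ∈ B)

lemma pairWeight_eq (b q : ℝ) (A B : Finset V) :
    pairWeight b q A B =
      b ^ #(A ∩ B) * (q - b) ^ (#(A \ B) + #(B \ A)) * (1 - 2 * q + b) ^ #(A ∪ B)ᶜ := by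
  have hmass (i : V) : pairMass b q (i ∈ A) (i ∈ B) =
      (if i ∈ A ∩ B then b else 1) * ((if i ∈ A \ B then q - b else 1) *
        (if i ∈ B \ A then q - b else 1)) * (if i ∈ (A ∪ B)ᶜ then 1 - 2 * q + b else 1) := by
    by_cases hA : i ∈ A <;> by_cases hB : i ∈ B <;> simp [pairMass, hA, hB]
  simp only [pairWeight, hmass, prod_mul_distrib, Fintype.prod_ite_mem, prod_const, pow_add]

lemma pairWeight_nonneg (hb : 0 ≤ b) (hbq : b ≤ q) (hq : 2 * q ≤ 1) (A B : Finset V) :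
    0 ≤ pairWeight b q A B := by
  rw [pairWeight_eq]
  have : 0 ≤ q - b := by linarith
  have : 0 ≤ 1 - 2 * q + b := by linarith
  positivity

lemma pairWeight_le (hb : 0 ≤ b) (hbq : b ≤ q) (hq0 : 0 < q) (hq : 2 * q ≤ 1)
    (hA : #A = l) (hB : #B = l) :
    pairWeight b q A B ≤
      q ^ (2 * l) * (1 - 2 * q + b) ^ (Fintype.card V - 2 * l) * (b / q ^ 2) ^ #(A ∩ B) := by
  have : 0 ≤ q - b := by linarith
  have hnone : 0 ≤ 1 - 2 * q + b := by linarith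
  have hcompl : Fintype.card V - 2 * l ≤ #(A ∪ B)ᶜ := by
    rw [card_compl]
    have := card_union_le A B
    lia
  have hexp : 2 * l = #(A \ B) + #(B \ A) + 2 * #(A ∩ B) := by
    have hAB := card_sdiff_add_card_inter A B
    have hBA := card_sdiff_add_card_inter B A
    rw [inter_comm B A] at hBA
    lia
  calc pairWeight b q A B
      = b ^ #(A ∩ B) * (q - b) ^ (#(A \ B) + #(B \ A)) * (1 - 2 * q + b) ^ #(A ∪ B)ᶜ :=
        pairWeight_eq b q A B
    _ ≤ b ^ #(A ∩ B) * q ^ (#(A \ B) + #(B \ A)) *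
          (1 - 2 * q + b) ^ (Fintype.card V - 2 * l) := by
        refine mul_le_mul ?_ (pow_le_pow_of_le_one hnone (by linarith) hcompl) (by positivity)
          (by positivity)
        gcongr
        linarith
    _ = _ := by
        nth_rewrite 2 [hexp]
        rw [pow_add q (_ + _) (2 * _), pow_mul q, div_pow]
        field_simp

lemma le_pairWeight_of_disjoint (hb : 0 ≤ b) (hbq : b ≤ q) (hq : 2 * q ≤ 1)
    (hA : #A = l) (hB : #B = l) (hAB : Disjoint A B) :
    (q - b) ^ (2 * l) * (1 - 2 * q) ^ Fintype.card V ≤ pairWeight b q A B := by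
  have : 0 ≤ q - b := by linarith
  have hnone : 0 ≤ 1 - 2 * q := by linarith
  rw [pairWeight_eq, disjoint_iff_inter_eq_empty.1 hAB, sdiff_eq_self_of_disjoint hAB,
    sdiff_eq_self_of_disjoint hAB.symm, hA, hB, card_empty, pow_zero, one_mul, ← two_mul]
  gcongr
  calc (1 - 2 * q) ^ Fintype.card V ≤ (1 - 2 * q) ^ #(A ∪ B)ᶜ :=
        pow_le_pow_of_le_one hnone (by linarith) (card_le_univ _)
    _ ≤ (1 - 2 * q + b) ^ #(A ∪ B)ᶜ := by
        gcongr
        linarith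

-- Expand `r ^ #(A ∩ B)` into a sum over the subsets `D` of `A` contained in `B`, and count `B`.
lemma sum_pow_card_inter_le {r : ℝ} (hr : 0 ≤ r) (hA : #A = l) :
    ∑ B ∈ powersetCard l univ, r ^ #(A ∩ B) ≤ (r * l + Fintype.card V) ^ l / l.factorial := by
  calc ∑ B ∈ powersetCard l univ, r ^ #(A ∩ B)
      ≤ ∑ B ∈ powersetCard l univ, ∑ D ∈ A.powerset, if D ⊆ B then r ^ #D else 0 := by
        refine sum_le_sum fun B _ => ?_
        have h := single_le_sum (f := fun D => if D ⊆ B then r ^ #D else 0)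
          (fun D _ => by positivity) (mem_powerset.2 (inter_subset_left : A ∩ B ⊆ A))
        simpa [inter_subset_right] using h
    _ = ∑ D ∈ A.powerset, r ^ #D * (Fintype.card V - #D).choose (l - #D) := by
        rw [sum_comm]
        refine sum_congr rfl fun D hD => ?_
        have hDl : #D ≤ l := hA ▸ card_le_card (mem_powerset.1 hD)
        rw [← sum_filter, sum_const, nsmul_eq_mul,
          card_filter_powersetCard_subset _ _ _ (subset_univ _) hDl, card_univ, mul_comm]
    _ ≤ ∑ D ∈ A.powerset,
          (r * l) ^ #D * (Fintype.card V : ℝ) ^ (#A - #D) / l.factorial := by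
        refine sum_le_sum fun D hD => ?_
        have hDl : #D ≤ l := hA ▸ card_le_card (mem_powerset.1 hD)
        rw [hA, mul_pow, mul_assoc, mul_div_assoc]
        gcongr
        rw [le_div_iff₀ (by positivity)]
        exact_mod_cast choose_sub_sub_mul_factorial_le (Fintype.card V) hDl
    _ = _ := by rw [← sum_div, sum_pow_mul_eq_add_pow, hA]

/-- The probability that independent trials indexed by `V`, with masses `pairMass b q`, select each
of the two nodes exactly `l` times. -/
def pairProb (V : Type*) [Fintype V] [DecidableEq V] (b q : ℝ) (l : ℕ) : ℝ :=
  ∑ A ∈ powersetCard l (univ : Finset V), ∑ B ∈ powersetCard l univ, pairWeight b q A B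

lemma pairProb_nonneg (hb : 0 ≤ b) (hbq : b ≤ q) (hq : 2 * q ≤ 1) (l : ℕ) :
    0 ≤ pairProb V b q l :=
  sum_nonneg fun _ _ => sum_nonneg fun _ _ => pairWeight_nonneg hb hbq hq _ _

lemma pairProb_le (hb : 0 ≤ b) (hbq : b ≤ q) (hq0 : 0 < q) (hq : 2 * q ≤ 1) (l : ℕ) :
    pairProb V b q l ≤ (Fintype.card V : ℝ) ^ l * (b / q ^ 2 * l + Fintype.card V) ^ l *
      q ^ (2 * l) * (1 - 2 * q + b) ^ (Fintype.card V - 2 * l) / (l.factorial : ℝ) ^ 2 := by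
  set c := q ^ (2 * l) * (1 - 2 * q + b) ^ (Fintype.card V - 2 * l) with hc
  have : 0 ≤ c := by
    have : 0 ≤ 1 - 2 * q + b := by linarith
    positivity
  calc pairProb V b q l
      ≤ ∑ A ∈ powersetCard l (univ : Finset V), ∑ B ∈ powersetCard l univ,
          c * (b / q ^ 2) ^ #(A ∩ B) :=
        sum_le_sum fun A hA => sum_le_sum fun B hB =>
          pairWeight_le hb hbq hq0 hq (mem_powersetCard.1 hA).2 (mem_powersetCard.1 hB).2
    _ ≤ ∑ A ∈ powersetCard l (univ : Finset V),
          c * ((b / q ^ 2 * l + Fintype.card V) ^ l / l.factorial) := by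
        refine sum_le_sum fun A hA => ?_
        rw [← mul_sum]
        gcongr
        exact sum_pow_card_inter_le (by positivity) (mem_powersetCard.1 hA).2
    _ = (Fintype.card V).choose l *
          (c * ((b / q ^ 2 * l + Fintype.card V) ^ l / l.factorial)) := by
        rw [sum_const, nsmul_eq_mul, card_powersetCard, card_univ]
    _ ≤ ((Fintype.card V : ℝ) ^ l / l.factorial) *
          (c * ((b / q ^ 2 * l + Fintype.card V) ^ l / l.factorial)) := by
        gcongr
        exact Nat.choose_le_pow_div l _
    _ = _ := by
        rw [hc]
        ring

lemma le_pairProb (hb : 0 ≤ b) (hbq : b ≤ q) (hq : 2 * q ≤ 1) (l : ℕ) :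
    ((Fintype.card V - 2 * l : ℕ) : ℝ) ^ (2 * l) * (q - b) ^ (2 * l) *
      (1 - 2 * q) ^ Fintype.card V / (l.factorial : ℝ) ^ 2 ≤ pairProb V b q l := by
  set N := Fintype.card V
  set c := (q - b) ^ (2 * l) * (1 - 2 * q) ^ N with hc
  have : 0 ≤ c := by
    have : 0 ≤ q - b := by linarith
    have : 0 ≤ 1 - 2 * q := by linarith
    positivity
  have hchoose {m : ℕ} (hm : N - l ≤ m) :
      ((N - 2 * l : ℕ) : ℝ) ^ l / l.factorial ≤ m.choose l := by
    have hsub : N - 2 * l ≤ m - l := by lia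
    refine le_trans ?_ (sub_pow_div_factorial_le_choose m l)
    gcongr
  calc ((N - 2 * l : ℕ) : ℝ) ^ (2 * l) * (q - b) ^ (2 * l) * (1 - 2 * q) ^ N /
          (l.factorial : ℝ) ^ 2
      = (((N - 2 * l : ℕ) : ℝ) ^ l / l.factorial) *
          ((((N - 2 * l : ℕ) : ℝ) ^ l / l.factorial) * c) := by
        rw [hc]
        ring
    _ ≤ (N.choose l : ℝ) * (((N - l).choose l : ℝ) * c) := by
        gcongr
        · exact hchoose (Nat.sub_le _ _)
        · exact hchoose le_rfl
    _ = ∑ A ∈ powersetCard l (univ : Finset V), ∑ _B ∈ powersetCard l Aᶜ, c := by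
        have hinner (A) (hA : A ∈ powersetCard l (univ : Finset V)) :
            ∑ _B ∈ powersetCard l Aᶜ, c = (N - l).choose l * c := by
          rw [sum_const, nsmul_eq_mul, card_powersetCard, card_compl, (mem_powersetCard.1 hA).2]
        rw [sum_congr rfl hinner, sum_const, nsmul_eq_mul, card_powersetCard, card_univ]
    _ ≤ ∑ A ∈ powersetCard l (univ : Finset V), ∑ B ∈ powersetCard l Aᶜ, pairWeight b q A B :=
        sum_le_sum fun A hA => sum_le_sum fun B hB =>
          le_pairWeight_of_disjoint hb hbq hq (mem_powersetCard.1 hA).2 (mem_powersetCard.1 hB).2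
            (disjoint_comm.1 (subset_compl_iff_disjoint_right.1 (mem_powersetCard.1 hB).1))
    _ ≤ pairProb V b q l :=
        sum_le_sum fun A _ => sum_le_sum_of_subset_of_nonneg
          (powersetCard_mono (subset_univ _)) fun B _ _ => pairWeight_nonneg hb hbq hq A B

end PairWeight

/-! ### Conditioning on two coordinates -/

section PairCondition

open Finset
open scoped BigOperators

/-- The indices other than `a` and `b`. -/
abbrev Others {I : Type*} (a b : I) : Type _ := {i : I // i ≠ a ∧ i ≠ b}

variable {I R : Type*} [Fintype I] [DecidableEq I] {a b : I}

lemma sum_eq_add_add_sum_others {M : Type*} [AddCommMonoid M] (hab : a ≠ b) (f : I → M) :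
    ∑ i, f i = f a + f b + ∑ i : Others a b, f i := by
  have hothers : ∑ i ∈ (univ.erase a).erase b, f i = ∑ i : Others a b, f i :=
    sum_subtype _ (by simp [and_comm]) f
  rw [← hothers, add_assoc, add_sum_erase _ _ (by simp [hab.symm]),
    add_sum_erase _ _ (mem_univ a)]

lemma card_others_add_two (hab : a ≠ b) : Fintype.card (Others a b) + 2 = Fintype.card I := by
  have h := sum_eq_add_add_sum_others hab fun _ => 1
  simp only [sum_const, smul_eq_mul, mul_one, card_univ] at h
  lia

/-- A family of values is the pair of its values at `a` and `b` together with the others. -/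
def pairOthersEquiv (R : Type*) {I : Type*} [DecidableEq I] {a b : I} (hab : a ≠ b) :
    (I → R) ≃ (R × R) × (Others a b → R) where
  toFun S := ((S a, S b), fun i => S i)
  invFun x i := if ha : i = a then x.1.1 else if hb : i = b then x.1.2 else x.2 ⟨i, ha, hb⟩
  left_inv S := by
    ext i
    by_cases ha : i = a
    · simp [ha]
    · by_cases hb : i = b <;> simp [ha, hb, hab.symm]
  right_inv x := by
    ext i
    · simp
    · simp [hab.symm]
    · simp [i.2.1, i.2.2]

variable [Fintype R]

lemma expect_prod_apply (g : I → R → ℝ) :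
    𝔼 S : I → R, ∏ i, g i (S i) = ∏ i, 𝔼 r, g i r := by
  have hsum := prod_univ_sum (fun _ : I => (univ : Finset R)) g
  rw [Fintype.piFinset_univ] at hsum
  simp only [Fintype.expect_eq_sum_div_card, prod_div_distrib, hsum, prod_const, card_univ,
    Fintype.card_fun, Nat.cast_pow]

lemma expect_pair_condition (hab : a ≠ b) (G : R → R → ℝ) (g : Others a b → R → R → R → ℝ) :
    𝔼 S : I → R, G (S a) (S b) * ∏ i, g i (S a) (S b) (S i) =
      𝔼 s, 𝔼 t, G s t * ∏ i, 𝔼 r, g i s t r := by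
  calc 𝔼 S : I → R, G (S a) (S b) * ∏ i, g i (S a) (S b) (S i)
      = 𝔼 x : (R × R) × (Others a b → R), G x.1.1 x.1.2 * ∏ i, g i x.1.1 x.1.2 (x.2 i) :=
        Fintype.expect_equiv (pairOthersEquiv R hab) _ _ fun _ => rfl
    _ = 𝔼 s, 𝔼 t, 𝔼 f : Others a b → R, G s t * ∏ i, g i s t (f i) := by
        simp only [← univ_product_univ, expect_product]
    _ = _ := by simp only [← mul_expect, expect_prod_apply]

end PairCondition

section Independence

open ProbabilityTheory

lemma pi_real_forall_mem_eq_prod {E J Ω : Type*} [Fintype E] [Fintype J] [MeasurableSpace Ω]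
    (μ : Measure Ω) [IsProbabilityMeasure μ] {e : J → E} (he : Function.Injective e)
    {T : J → Set Ω} (hT : ∀ j, MeasurableSet (T j)) :
    (Measure.pi fun _ : E => μ).real {C | ∀ j, C (e j) ∈ T j} = ∏ j, μ.real (T j) := by
  have hindep : iIndepFun (fun (j : J) (C : E → Ω) => C (e j)) (Measure.pi fun _ : E => μ) :=
    (iIndepFun_pi (X := fun _ => id) fun _ => aemeasurable_id).precomp he
  have hinter := hindep.measure_inter_preimage_eq_mul Finset.univ fun j _ => hT j
  have hset : {C : E → Ω | ∀ j, C (e j) ∈ T j} =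
      ⋂ j ∈ Finset.univ, (fun C : E → Ω => C (e j)) ⁻¹' T j := by
    ext C
    simp
  rw [measureReal_def, hset, hinter, ENNReal.toReal_prod]
  refine Finset.prod_congr rfl fun j _ => ?_
  rw [measureReal_def,
    (measurePreserving_eval (fun _ : E => μ) (e j)).measure_preimage (hT j).nullMeasurableSet]

end Independence

/-! ### Adjacency patterns of two nodes -/

section AdjPattern

open Finset

variable {V : Type*} [Fintype V]

open Classical in
lemma gDeg_eq_sum (G : SimpleGraph V) (v : V) : gDeg G v = ∑ w, if G.Adj v w then 1 else 0 := by
  rw [gDeg, Nat.card_eq_fintype_card, Fintype.card_subtype, card_filter]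

/-- The adjacency patterns in which both distinguished vertices have degree `l`. -/
def degPatterns (V : Type*) [Fintype V] (l : ℕ) : Finset (Bool × Finset V × Finset V) :=
  {x | #x.2.1 + x.1.toNat = l ∧ #x.2.2 + x.1.toNat = l}

lemma sum_degPatterns (f : Bool → Finset V → Finset V → ℝ) (l : ℕ) :
    ∑ x ∈ degPatterns V l, f x.1 x.2.1 x.2.2 =
      ∑ e : Bool, ∑ A : Finset V with #A + e.toNat = l, ∑ B : Finset V with #B + e.toNat = l,
        f e A B := by
  simp only [degPatterns, sum_filter, Fintype.sum_prod_type, ite_and, Finset.sum_ite_irrel,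
    sum_const_zero]

variable [DecidableEq V] {a b : V}

open Classical in
/-- How `a` and `b` are attached: whether they are adjacent, and which other vertices are adjacent
to `a` and to `b`. -/
def adjPattern (G : SimpleGraph V) (a b : V) :
    Bool × Finset (Others a b) × Finset (Others a b) :=
  (decide (G.Adj a b), ({i : Others a b | G.Adj a i} : Finset _),
    ({i : Others a b | G.Adj b i} : Finset _))

lemma adjPattern_eq_iff (G : SimpleGraph V) (a b : V) (e : Bool) (A B : Finset (Others a b)) :
    adjPattern G a b = (e, A, B) ↔
      (G.Adj a b ↔ e = true) ∧ (∀ i : Others a b, G.Adj a i ↔ i ∈ A) ∧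
        ∀ i : Others a b, G.Adj b i ↔ i ∈ B := by
  simp only [adjPattern, Prod.mk.injEq, Finset.ext_iff, mem_filter, mem_univ, true_and]
  cases e <;> simp

lemma gDeg_left (G : SimpleGraph V) (hab : a ≠ b) :
    gDeg G a = #(adjPattern G a b).2.1 + (adjPattern G a b).1.toNat := by
  classical
  rw [gDeg_eq_sum, sum_eq_add_add_sum_others hab, adjPattern, card_filter]
  by_cases h : G.Adj a b <;> simp [h, add_comm]

lemma gDeg_right (G : SimpleGraph V) (hab : a ≠ b) :
    gDeg G b = #(adjPattern G a b).2.2 + (adjPattern G a b).1.toNat := by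
  classical
  rw [gDeg_eq_sum, sum_eq_add_add_sum_others hab, adjPattern, card_filter]
  by_cases h : G.Adj a b <;> simp [h, G.adj_comm b a, add_comm]

lemma adjPattern_mem_degPatterns (G : SimpleGraph V) (hab : a ≠ b) (l : ℕ) :
    adjPattern G a b ∈ degPatterns (Others a b) l ↔ gDeg G a = l ∧ gDeg G b = l := by
  rw [gDeg_left G hab, gDeg_right G hab, degPatterns, mem_filter_univ]

end AdjPattern

section Model

open Finset
open scoped BigOperators

/-- The mass given by the Bernoulli distribution with success probability `x` to success or failure
according to `c`. -/
def bernMass (x : ℝ) (c : Prop) [Decidable c] : ℝ := if c then x else 1 - x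

lemma isProbabilityMeasure_bern {p : ℝ} (hp0 : 0 ≤ p) (hp1 : p ≤ 1) :
    IsProbabilityMeasure (bern p) := by
  constructor
  simp only [bern, Measure.coe_add, Measure.coe_smul, Pi.add_apply, Pi.smul_apply, smul_eq_mul,
    measure_univ, mul_one]
  rw [← ENNReal.ofReal_add hp0 (sub_nonneg.2 hp1), add_sub_cancel, ENNReal.ofReal_one]

lemma bern_real_and_iff {p : ℝ} (hp0 : 0 ≤ p) (hp1 : p ≤ 1) (h c : Prop) [Decidable h]
    [Decidable c] :
    (bern p).real {d | h ∧ d = true ↔ c} = bernMass (if h then p else 0) c := by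
  have hp : 0 ≤ 1 - p := sub_nonneg.2 hp1
  by_cases hh : h <;> by_cases hc : c <;>
    simp [measureReal_def, bern, bernMass, hh, hc, hp0, hp, ENNReal.toReal_add]

instance (P K : ℕ) : MeasurableSingletonClass (KeyRing P K) := ⟨fun _ => trivial⟩

instance (P K : ℕ) : IsFiniteMeasure (uniformKeyMeasure P K) := by
  constructor
  rw [uniformKeyMeasure, Measure.smul_apply, smul_eq_mul, Measure.count_univ,
    ENat.card_eq_coe_fintype_card]
  exact (ENNReal.inv_mul_le_one _).trans_lt ENNReal.one_lt_top

lemma pi_uniformKeyMeasure_singleton {n P K : ℕ} (S : Fin n → KeyRing P K) :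
    Measure.pi (fun _ => uniformKeyMeasure P K) {S} =
      (Fintype.card (Fin n → KeyRing P K) : ℝ≥0∞)⁻¹ := by
  rw [Measure.pi_singleton]
  simp [uniformKeyMeasure, ENNReal.inv_pow]

lemma gonMeasure_real_eq_expect {n K P : ℕ} {p : ℝ} (hp0 : 0 ≤ p) (hp1 : p ≤ 1)
    (E : Set (GonSpace n K P)) :
    (gonMeasure n K P p).real E =
      𝔼 S, (Measure.pi fun _ : Sym2 (Fin n) => bern p).real {C | (S, C) ∈ E} := by
  have := isProbabilityMeasure_bern hp0 hp1
  rw [measureReal_def, gonMeasure, Measure.prod_apply E.toFinite.measurableSet, lintegral_fintype,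
    ENNReal.toReal_sum fun S _ => ENNReal.mul_ne_top (measure_ne_top _ _) (measure_ne_top _ _),
    Fintype.expect_eq_sum_div_card, sum_div]
  refine sum_congr rfl fun S _ => ?_
  rw [pi_uniformKeyMeasure_singleton, ENNReal.toReal_mul, ENNReal.toReal_inv,
    ENNReal.toReal_natCast, div_eq_mul_inv, measureReal_def]
  rfl

/-- The pairs of vertices on which the adjacency pattern of `a` and `b` depends. -/
def incidentPair {V : Type*} (a b : V) : Option (Others a b ⊕ Others a b) → Sym2 V
  | none => s(a, b)
  | some (.inl i) => s(a, i.1)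
  | some (.inr i) => s(b, i.1)

lemma incidentPair_injective {V : Type*} {a b : V} (hab : a ≠ b) :
    Function.Injective (incidentPair a b) := by
  rintro (_ | ⟨i, hi⟩ | ⟨i, hi⟩) (_ | ⟨j, hj⟩ | ⟨j, hj⟩) h <;>
    simp only [incidentPair, Sym2.eq_iff, Option.some.injEq, Sum.inl.injEq, Sum.inr.injEq,
      Subtype.mk.injEq] at h ⊢ <;> grind

variable {n K P : ℕ} {p : ℝ} {a b : Fin n}

lemma adjPattern_gonGraph_eq_iff (hab : a ≠ b) (S : Fin n → KeyRing P K)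
    (C : Sym2 (Fin n) → Bool) (e : Bool) (A B : Finset (Others a b)) :
    adjPattern (gonGraph (S, C)) a b = (e, A, B) ↔
      ((S a).Meets (S b) ∧ C s(a, b) = true ↔ e = true) ∧
      (∀ i : Others a b, (S a).Meets (S i) ∧ C s(a, i.1) = true ↔ i ∈ A) ∧
        ∀ i : Others a b, (S b).Meets (S i) ∧ C s(b, i.1) = true ↔ i ∈ B := by
  rw [adjPattern_eq_iff]
  refine and_congr (iff_congr (and_iff_right hab) Iff.rfl) (and_congr ?_ ?_)
  · exact forall_congr' fun i => iff_congr (and_iff_right i.2.1.symm) Iff.rfl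
  · exact forall_congr' fun i => iff_congr (and_iff_right i.2.2.symm) Iff.rfl

/-- The probability of an edge between nodes with key rings `s` and `t`. -/
def keyedEdgeProb (p : ℝ) (s t : KeyRing P K) : ℝ := if s.Meets t then p else 0

lemma channel_real_adjPattern (hp0 : 0 ≤ p) (hp1 : p ≤ 1) (hab : a ≠ b)
    (S : Fin n → KeyRing P K) (e : Bool) (A B : Finset (Others a b)) :
    (Measure.pi fun _ : Sym2 (Fin n) => bern p).real
        {C | adjPattern (gonGraph (S, C)) a b = (e, A, B)} =
      bernMass (keyedEdgeProb p (S a) (S b)) (e = true) *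
        ∏ i : Others a b, bernMass (keyedEdgeProb p (S a) (S i)) (i ∈ A) *
          bernMass (keyedEdgeProb p (S b) (S i)) (i ∈ B) := by
  have := isProbabilityMeasure_bern hp0 hp1
  let T : Option (Others a b ⊕ Others a b) → Set Bool
    | none => {d | (S a).Meets (S b) ∧ d = true ↔ e = true}
    | some (.inl i) => {d | (S a).Meets (S i) ∧ d = true ↔ i ∈ A}
    | some (.inr i) => {d | (S b).Meets (S i) ∧ d = true ↔ i ∈ B}
  have hset : {C | adjPattern (gonGraph (S, C)) a b = (e, A, B)} =
      {C : Sym2 (Fin n) → Bool | ∀ j, C (incidentPair a b j) ∈ T j} := by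
    ext C
    simp only [Set.mem_ofPred_eq, adjPattern_gonGraph_eq_iff hab, Option.forall, Sum.forall,
      incidentPair, T]
  rw [hset, pi_real_forall_mem_eq_prod _ (incidentPair_injective hab) fun j =>
      (T j).toFinite.measurableSet, Fintype.prod_option, Fintype.prod_sum_type, ← prod_mul_distrib]
  simp only [T, bern_real_and_iff hp0 hp1, keyedEdgeProb]

-- The left-hand side is an affine combination of the averages of `X`, `Y` and `X Y`.
lemma expect_bernMass_mul_bernMass {R : Type*} [Fintype R] [Nonempty R] {X Y : R → ℝ} {b q : ℝ}
    (hX : 𝔼 r, X r = q) (hY : 𝔼 r, Y r = q) (hXY : 𝔼 r, X r * Y r = b) (c d : Prop)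
    [Decidable c] [Decidable d] :
    𝔼 r, bernMass (X r) c * bernMass (Y r) d = pairMass b q c d := by
  have hone : 𝔼 _r : R, (1 : ℝ) = 1 := Fintype.expect_const 1
  by_cases hc : c <;> by_cases hd : d <;>
    simp only [bernMass, pairMass, hc, hd, if_true, if_false, mul_sub, sub_mul, mul_one, one_mul,
      expect_sub_distrib, hX, hY, hXY, hone]
  ring

lemma expect_keyedEdgeProb (hKP : K ≤ P) (p : ℝ) (s : KeyRing P K) :
    𝔼 r, keyedEdgeProb p s r = pef K P p := by
  rw [pef, ← KeyRing.expect_meets hKP s, mul_expect]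
  simp only [keyedEdgeProb, mul_ite, mul_one, mul_zero]

lemma expect_keyedEdgeProb_mul (p : ℝ) (s t : KeyRing P K) :
    𝔼 r, keyedEdgeProb p s r * keyedEdgeProb p t r = p ^ 2 * s.bothProb t := by
  rw [KeyRing.bothProb, mul_expect]
  refine expect_congr rfl fun r _ => ?_
  by_cases hs : s.Meets r <;> by_cases ht : t.Meets r <;> simp [keyedEdgeProb, hs, ht, sq]

lemma gonMeasure_real_adjPattern (hKP : K ≤ P) (hp0 : 0 ≤ p) (hp1 : p ≤ 1) (hab : a ≠ b)
    (e : Bool) (A B : Finset (Others a b)) :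
    (gonMeasure n K P p).real {ω | adjPattern (gonGraph ω) a b = (e, A, B)} =
      𝔼 s : KeyRing P K, 𝔼 t, bernMass (keyedEdgeProb p s t) (e = true) *
        pairWeight (p ^ 2 * s.bothProb t) (pef K P p) A B := by
  have := KeyRing.nonempty hKP
  calc (gonMeasure n K P p).real {ω | adjPattern (gonGraph ω) a b = (e, A, B)}
      = 𝔼 S : Fin n → KeyRing P K, bernMass (keyedEdgeProb p (S a) (S b)) (e = true) *
          ∏ i : Others a b, bernMass (keyedEdgeProb p (S a) (S i)) (i ∈ A) *
            bernMass (keyedEdgeProb p (S b) (S i)) (i ∈ B) := by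
        rw [gonMeasure_real_eq_expect hp0 hp1]
        exact expect_congr rfl fun S _ => channel_real_adjPattern hp0 hp1 hab S e A B
    _ = 𝔼 s : KeyRing P K, 𝔼 t, bernMass (keyedEdgeProb p s t) (e = true) *
          ∏ i : Others a b, 𝔼 r, bernMass (keyedEdgeProb p s r) (i ∈ A) *
            bernMass (keyedEdgeProb p t r) (i ∈ B) :=
        expect_pair_condition hab (fun s t => bernMass (keyedEdgeProb p s t) (e = true))
          fun i s t r => bernMass (keyedEdgeProb p s r) (i ∈ A) *
            bernMass (keyedEdgeProb p t r) (i ∈ B)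
    _ = _ := by
        simp only [pairWeight, expect_bernMass_mul_bernMass (expect_keyedEdgeProb hKP p _)
          (expect_keyedEdgeProb hKP p _) (expect_keyedEdgeProb_mul p _ _)]

/-- The probability that two nodes both have degree `l` in terms of the probability `x` that they
are adjacent and the probability `b` that a third node is adjacent to both, when the other nodes,
indexed by `V`, attach independently and each is adjacent to a given one of the two with
probability `q`. -/
def jointDegreeProb (V : Type*) [Fintype V] [DecidableEq V] (x b q : ℝ) : ℕ → ℝ
  | 0 => (1 - x) * pairProb V b q 0
  | l + 1 => (1 - x) * pairProb V b q (l + 1) + x * pairProb V b q l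

lemma sum_degPatterns_eq_jointDegreeProb (V : Type*) [Fintype V] [DecidableEq V] (x b q : ℝ)
    (l : ℕ) :
    ∑ y ∈ degPatterns V l, bernMass x (y.1 = true) * pairWeight b q y.2.1 y.2.2 =
      jointDegreeProb V x b q l := by
  rw [sum_degPatterns fun e A B => bernMass x (e = true) * pairWeight b q A B, Fintype.sum_bool,
    add_comm]
  cases l <;>
    simp [← mul_sum, bernMass, jointDegreeProb, pairProb, univ_filter_card_eq, filter_eq']

lemma gonMeasure_real_degEvent_inter (hKP : K ≤ P) (hp0 : 0 ≤ p) (hp1 : p ≤ 1) (hab : a ≠ b)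
    (l : ℕ) :
    (gonMeasure n K P p).real (degEvent n K P a l ∩ degEvent n K P b l) =
      𝔼 s : KeyRing P K, 𝔼 t, jointDegreeProb (Others a b) (keyedEdgeProb p s t)
        (p ^ 2 * s.bothProb t) (pef K P p) l := by
  have := isProbabilityMeasure_bern hp0 hp1
  have : IsFiniteMeasure (gonMeasure n K P p) := by
    unfold gonMeasure
    infer_instance
  have hevent : degEvent n K P a l ∩ degEvent n K P b l =
      (fun ω => adjPattern (gonGraph ω) a b) ⁻¹' (degPatterns (Others a b) l) := by
    ext ω
    simp [degEvent, adjPattern_mem_degPatterns _ hab]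
  rw [hevent, ← sum_measureReal_preimage_singleton]
  · simp only [← sum_degPatterns_eq_jointDegreeProb, expect_sum_comm]
    exact sum_congr rfl fun y _ => gonMeasure_real_adjPattern hKP hp0 hp1 hab y.1 y.2.1 y.2.2
  · exact fun y _ => Set.Finite.measurableSet (Set.toFinite _)

end Model

/-! ### Comparison with two independent Poisson degrees -/

section PoissonComparison

open Finset

/-- The probability that two independent Poisson variables with mean `m` both equal `l`. -/
def poissonPairMass (m : ℝ) (l : ℕ) : ℝ :=
  1 / (l.factorial : ℝ) ^ 2 * m ^ (2 * l) * Real.exp (-2 * m)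

lemma poissonPairMass_pos {m : ℝ} (hm : 0 < m) (l : ℕ) : 0 < poissonPairMass m l := by
  unfold poissonPairMass
  positivity

lemma poissonPairMass_eq_succ {m : ℝ} (hm : m ≠ 0) (l : ℕ) :
    poissonPairMass m l = poissonPairMass m (l + 1) * (((l + 1 : ℕ) : ℝ) / m) ^ 2 := by
  unfold poissonPairMass
  rw [Nat.factorial_succ, mul_add, pow_add]
  push_cast
  field_simp

variable {V : Type*} [Fintype V] {n : ℕ} {b q u x : ℝ} {l : ℕ}

lemma pow_card_sub_le_exp (hV : Fintype.card V + 2 = n) (hb : 0 ≤ b) (hbq : b ≤ 2 * q)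
    (hq : 2 * q ≤ 1) (l : ℕ) :
    (1 - 2 * q + b) ^ (Fintype.card V - 2 * l) ≤
      Real.exp (-2 * (q * n)) * Real.exp ((4 * l + 4) * q + n * b) := by
  have hcard : (n : ℝ) - 2 - 2 * l ≤ (Fintype.card V - 2 * l : ℕ) := by
    have h : (n : ℝ) ≤ ((Fintype.card V - 2 * l + 2 * l + 2 : ℕ) : ℝ) := by
      exact_mod_cast (by lia)
    push_cast at h
    linarith
  calc (1 - 2 * q + b) ^ (Fintype.card V - 2 * l)
      ≤ Real.exp (-(2 * q - b)) ^ (Fintype.card V - 2 * l) := by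
        refine pow_le_pow_left₀ (by linarith) ?_ _
        linarith [Real.add_one_le_exp (-(2 * q - b))]
    _ = Real.exp (-((2 * q - b) * (Fintype.card V - 2 * l : ℕ))) := by
        rw [← Real.exp_nat_mul, mul_neg, mul_comm]
    _ ≤ Real.exp (-2 * (q * n) + ((4 * l + 4) * q + n * b)) := by
        refine Real.exp_le_exp.2 ?_
        have h := mul_le_mul_of_nonneg_left hcard (sub_nonneg.2 hbq)
        have hbl : 0 ≤ b * (2 + 2 * l) := by positivity
        linarith
    _ = _ := Real.exp_add _ _

variable [DecidableEq V]

lemma pairProb_le_poissonPairMass (hV : Fintype.card V + 2 = n) (hb : 0 ≤ b) (hbq : b ≤ q)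
    (hq0 : 0 < q) (hq : 2 * q ≤ 1) (l : ℕ) :
    pairProb V b q l ≤ poissonPairMass (q * n) l *
      ((1 + l * b / (n * q ^ 2)) ^ l * Real.exp ((4 * l + 4) * q + n * b)) := by
  have hn : (0 : ℝ) < n := by rw [← hV]; positivity
  have hVn : (Fintype.card V : ℝ) ≤ n := by exact_mod_cast (by lia)
  have : 0 ≤ 1 - 2 * q + b := by linarith
  calc pairProb V b q l
      ≤ (Fintype.card V : ℝ) ^ l * (b / q ^ 2 * l + Fintype.card V) ^ l *
          q ^ (2 * l) * (1 - 2 * q + b) ^ (Fintype.card V - 2 * l) / (l.factorial : ℝ) ^ 2 :=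
        pairProb_le hb hbq hq0 hq l
    _ ≤ (n : ℝ) ^ l * (b / q ^ 2 * l + n) ^ l * q ^ (2 * l) *
          (Real.exp (-2 * (q * n)) * Real.exp ((4 * l + 4) * q + n * b)) /
            (l.factorial : ℝ) ^ 2 := by
        gcongr
        exact pow_card_sub_le_exp hV hb (by linarith) hq l
    _ = _ := by
        have hfactor : b / q ^ 2 * l + n = n * (1 + l * b / (n * q ^ 2)) := by
          field_simp
          ring
        rw [hfactor, mul_pow (n : ℝ), poissonPairMass, mul_pow q]
        ring

lemma exp_mul_one_sub_le_pow (hq0 : 0 ≤ q) (hq : 2 * q ≤ 1) (n : ℕ) :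
    Real.exp (-2 * (q * n)) * (1 - 4 * (n * q ^ 2)) ≤ (1 - 2 * q) ^ n := by
  have hnone : 0 ≤ 1 - 2 * q := by linarith
  have hexp : 1 - 4 * q ^ 2 ≤ (1 - 2 * q) * Real.exp (2 * q) := by
    linarith [mul_le_mul_of_nonneg_left (Real.add_one_le_exp (2 * q)) hnone]
  calc Real.exp (-2 * (q * n)) * (1 - 4 * (n * q ^ 2))
      = Real.exp (-2 * (q * n)) * (1 + n * -(4 * q ^ 2)) := by ring
    _ ≤ Real.exp (-2 * (q * n)) * (1 + -(4 * q ^ 2)) ^ n := by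
        gcongr
        exact one_add_mul_le_pow (by nlinarith) n
    _ ≤ Real.exp (-2 * (q * n)) * ((1 - 2 * q) * Real.exp (2 * q)) ^ n := by
        gcongr
        · nlinarith
        · linarith
    _ = (1 - 2 * q) ^ n * (Real.exp (-2 * (q * n)) * Real.exp (n * (2 * q))) := by
        rw [mul_pow, ← Real.exp_nat_mul]
        ring
    _ = (1 - 2 * q) ^ n := by
        rw [← Real.exp_add, show -2 * (q * n) + n * (2 * q) = 0 by ring, Real.exp_zero, mul_one]

lemma poissonPairMass_le_pairProb (hV : Fintype.card V + 2 = n) (hb : 0 ≤ b)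
    (hbq : b ≤ 2 * q ^ 2) (hq0 : 0 ≤ q) (hq : 2 * q ≤ 1) (hl : 2 * l + 2 ≤ n) :
    poissonPairMass (q * n) l * (((1 - (2 + 2 * l) / n) * (1 - 2 * q)) ^ (2 * l) *
      (1 - 4 * (n * q ^ 2))) ≤ pairProb V b q l := by
  have hn : (n : ℝ) ≠ 0 := by
    rw [← hV]
    positivity
  have hnone : 0 ≤ 1 - 2 * q := by linarith
  have hcard : (n : ℝ) * (1 - (2 + 2 * l) / n) = (Fintype.card V - 2 * l : ℕ) := by
    rw [← hV] at hn ⊢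
    push_cast [show 2 * l ≤ Fintype.card V by lia] at hn ⊢
    field_simp
    ring
  have hpow : Real.exp (-2 * (q * n)) * (1 - 4 * (n * q ^ 2)) ≤ (1 - 2 * q) ^ Fintype.card V :=
    (exp_mul_one_sub_le_pow hq0 hq n).trans
      (pow_le_pow_of_le_one hnone (by linarith) (hV ▸ Nat.le_add_right _ 2))
  calc poissonPairMass (q * n) l * (((1 - (2 + 2 * l) / n) * (1 - 2 * q)) ^ (2 * l) *
        (1 - 4 * (n * q ^ 2)))
      = (n * (1 - (2 + 2 * l) / n)) ^ (2 * l) * (q * (1 - 2 * q)) ^ (2 * l) *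
          (Real.exp (-2 * (q * n)) * (1 - 4 * (n * q ^ 2))) / (l.factorial : ℝ) ^ 2 := by
        simp only [poissonPairMass, mul_pow]
        ring
    _ ≤ ((Fintype.card V - 2 * l : ℕ) : ℝ) ^ (2 * l) * (q * (1 - 2 * q)) ^ (2 * l) *
          (1 - 2 * q) ^ Fintype.card V / (l.factorial : ℝ) ^ 2 := by
        rw [hcard]
        gcongr
    _ ≤ ((Fintype.card V - 2 * l : ℕ) : ℝ) ^ (2 * l) * (q - b) ^ (2 * l) *
          (1 - 2 * q) ^ Fintype.card V / (l.factorial : ℝ) ^ 2 := by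
        gcongr
        linarith
    _ ≤ pairProb V b q l := le_pairProb hb (by nlinarith) hq l

lemma jointDegreeProb_zero_left (V : Type*) [Fintype V] [DecidableEq V] (b q : ℝ) (l : ℕ) :
    jointDegreeProb V 0 b q l = pairProb V b q l := by
  cases l <;> simp [jointDegreeProb]

lemma jointDegreeProb_nonneg (hx0 : 0 ≤ x) (hx1 : x ≤ 1) (hb : 0 ≤ b) (hbq : b ≤ q)
    (hq : 2 * q ≤ 1) (l : ℕ) : 0 ≤ jointDegreeProb V x b q l := by
  have hx : 0 ≤ 1 - x := sub_nonneg.2 hx1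
  have hpair := pairProb_nonneg (V := V) hb hbq hq
  cases l with
  | zero => exact mul_nonneg hx (hpair 0)
  | succ l => exact add_nonneg (mul_nonneg hx (hpair _)) (mul_nonneg hx0 (hpair l))

lemma pairProb_le_of_div_le (hV : Fintype.card V + 2 = n) (hb : 0 ≤ b) (hbq : b ≤ q)
    (hq0 : 0 < q) (hq : 2 * q ≤ 1) (hu : l / (q * n) ≤ u) :
    pairProb V b q l ≤
      poissonPairMass (q * n) l * ((1 + u) ^ l * Real.exp ((4 * l + 4) * q + n * b)) := by
  have hn : (0 : ℝ) < n := by rw [← hV]; positivity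
  have hratio : l * b / (n * q ^ 2) ≤ u := by
    calc l * b / (n * q ^ 2) ≤ l * q / (n * q ^ 2) := by gcongr
      _ = l / (q * n) := by field_simp
      _ ≤ u := hu
  have hT := poissonPairMass_pos (mul_pos hq0 hn) l
  refine (pairProb_le_poissonPairMass hV hb hbq hq0 hq l).trans ?_
  gcongr

lemma jointDegreeProb_le (hV : Fintype.card V + 2 = n) (hx0 : 0 ≤ x) (hx1 : x ≤ 1) (hb : 0 ≤ b)
    (hbq : b ≤ q) (hq0 : 0 < q) (hq : 2 * q ≤ 1) (hu : l / (q * n) ≤ u) :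
    jointDegreeProb V x b q l ≤ poissonPairMass (q * n) l *
      ((1 + u) ^ l * (1 + u ^ 2) * Real.exp ((4 * l + 4) * q + n * b)) := by
  have hn : (0 : ℝ) < n := by rw [← hV]; positivity
  have hm : 0 < q * n := mul_pos hq0 hn
  have hu0 : 0 ≤ u := le_trans (by positivity) hu
  have hpair := pairProb_nonneg (V := V) hb hbq hq
  have hT := poissonPairMass_pos hm l
  have hmain := pairProb_le_of_div_le hV hb hbq hq0 hq hu
  cases l with
  | zero =>
    calc (1 - x) * pairProb V b q 0 ≤ pairProb V b q 0 :=
          mul_le_of_le_one_left (hpair 0) (by linarith)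
      _ ≤ _ := hmain
      _ ≤ _ := by
        gcongr
        exact le_mul_of_one_le_right (by positivity) (by nlinarith)
  | succ l =>
    have hsucc : (l : ℝ) ≤ (l + 1 : ℕ) := by exact_mod_cast l.le_succ
    have hadjacent : pairProb V b q l ≤ poissonPairMass (q * n) (l + 1) *
        (u ^ 2 * ((1 + u) ^ (l + 1) * Real.exp ((4 * (l + 1 : ℕ) + 4) * q + n * b))) := by
      have hul : l / (q * n) ≤ u := le_trans (by gcongr) hu
      refine (pairProb_le_of_div_le hV hb hbq hq0 hq hul).trans ?_
      rw [poissonPairMass_eq_succ hm.ne', mul_assoc]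
      gcongr
      · linarith
      · exact l.le_succ
    calc (1 - x) * pairProb V b q (l + 1) + x * pairProb V b q l
        ≤ pairProb V b q (l + 1) + pairProb V b q l := by
          gcongr
          · exact mul_le_of_le_one_left (hpair _) (by linarith)
          · exact mul_le_of_le_one_left (hpair _) hx1
      _ ≤ _ := add_le_add hmain hadjacent
      _ = _ := by ring

end PoissonComparison

section ModelBounds

open Finset
open scoped BigOperators

/-- A bound on the factor by which a common key of two nodes raises the probability that both have
a given degree. -/
def sharedKeyFactor (n K P : ℕ) (p : ℝ) : ℝ :=
  Real.exp (n * (p * pef K P p / (1 - psf K P)) / 2)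

lemma pef_nonneg {K P : ℕ} {p : ℝ} (hp0 : 0 ≤ p) : 0 ≤ pef K P p :=
  mul_nonneg hp0 (KeyRing.psf_nonneg K P)

lemma pef_pos {K P : ℕ} {p : ℝ} (hKP : K ≤ P) (hK : 0 < K) (hp0 : 0 < p) : 0 < pef K P p :=
  mul_pos hp0 (KeyRing.psf_pos hKP hK)

lemma pef_le_psf {K P : ℕ} {p : ℝ} (hp1 : p ≤ 1) : pef K P p ≤ psf K P :=
  mul_le_of_le_one_left (KeyRing.psf_nonneg K P) hp1

variable {n K P l : ℕ} {p u : ℝ} {a b : Fin n}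

lemma keyedEdgeProb_nonneg (hp0 : 0 ≤ p) (s t : KeyRing P K) : 0 ≤ keyedEdgeProb p s t := by
  unfold keyedEdgeProb
  positivity

lemma keyedEdgeProb_le_one (hp1 : p ≤ 1) (s t : KeyRing P K) : keyedEdgeProb p s t ≤ 1 := by
  unfold keyedEdgeProb
  split_ifs <;> linarith

lemma sq_mul_bothProb_nonneg (p : ℝ) (s t : KeyRing P K) : 0 ≤ p ^ 2 * s.bothProb t :=
  mul_nonneg (sq_nonneg p) (s.bothProb_nonneg t)

lemma sq_mul_bothProb_le_pef (hKP : K ≤ P) (hp0 : 0 ≤ p) (hp1 : p ≤ 1) (s t : KeyRing P K) :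
    p ^ 2 * s.bothProb t ≤ pef K P p :=
  mul_le_mul (pow_le_of_le_one hp0 hp1 two_ne_zero) (KeyRing.bothProb_le_psf hKP s t)
    (s.bothProb_nonneg t) hp0

lemma sq_mul_bothProb_le_of_not_meets (hKP : K ≤ P) (p : ℝ) (hps : psf K P ≤ 1 / 5)
    {s t : KeyRing P K} (hst : ¬ s.Meets t) : p ^ 2 * s.bothProb t ≤ 2 * pef K P p ^ 2 := by
  simpa using KeyRing.sq_mul_bothProb_le hKP p hps le_rfl s t
    (by simp [not_nonempty_iff_eq_empty.1 hst])

lemma jointDegreeProb_of_not_meets {s t : KeyRing P K} (hst : ¬ s.Meets t) (p q β : ℝ) (l : ℕ) :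
    jointDegreeProb (Others a b) (keyedEdgeProb p s t) β q l = pairProb (Others a b) β q l := by
  rw [keyedEdgeProb, if_neg hst, jointDegreeProb_zero_left]

lemma exp_sq_mul_bothProb_le (n : ℕ) (hKP : K ≤ P) (p : ℝ) (hps : psf K P ≤ 1 / 5)
    {s t : KeyRing P K} {j : ℕ} (hj : (#(s.1 ∩ t.1) : ℝ) ≤ j / 2 * K) (c : ℝ) :
    Real.exp (c + n * (p ^ 2 * s.bothProb t)) ≤
      Real.exp (c + 2 * (n * pef K P p ^ 2)) * sharedKeyFactor n K P p ^ j := by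
  rw [sharedKeyFactor, ← Real.exp_nat_mul, ← Real.exp_add, Real.exp_le_exp]
  have h := mul_le_mul_of_nonneg_left
    (KeyRing.sq_mul_bothProb_le hKP p hps (by positivity) s t hj) n.cast_nonneg
  linarith

lemma jointDegreeProb_le_sharedKeyFactor_pow (hKP : K ≤ P) (hK : 0 < K) (hp0 : 0 < p)
    (hp1 : p ≤ 1) (hps : psf K P ≤ 1 / 5) (hab : a ≠ b) (hu : l / (pef K P p * n) ≤ u)
    {s t : KeyRing P K} {j : ℕ} (hj : (#(s.1 ∩ t.1) : ℝ) ≤ j / 2 * K) :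
    jointDegreeProb (Others a b) (keyedEdgeProb p s t) (p ^ 2 * s.bothProb t) (pef K P p) l ≤
      poissonPairMass (pef K P p * n) l *
        (Real.exp ((4 * l + 4) * pef K P p + 2 * (n * pef K P p ^ 2)) *
          ((1 + u) ^ l * (1 + u ^ 2) * sharedKeyFactor n K P p ^ j)) := by
  have hn : (0 : ℝ) < n := by exact_mod_cast a.pos
  have hq0 := pef_pos hKP hK hp0
  have hT := poissonPairMass_pos (mul_pos hq0 hn) l
  have hu0 : 0 ≤ u := le_trans (by positivity) hu
  refine (jointDegreeProb_le ((card_others_add_two hab).trans (Fintype.card_fin n))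
    (keyedEdgeProb_nonneg hp0.le s t) (keyedEdgeProb_le_one hp1 s t)
    (sq_mul_bothProb_nonneg p s t) (sq_mul_bothProb_le_pef hKP hp0.le hp1 s t) hq0
    (by linarith [pef_le_psf (K := K) (P := P) hp1]) hu).trans ?_
  rw [mul_left_comm (Real.exp _)]
  gcongr
  exact exp_sq_mul_bothProb_le n hKP p hps hj _

lemma jointDegreeProb_le_of_not_meets (hKP : K ≤ P) (hK : 0 < K) (hp0 : 0 < p)
    (hp1 : p ≤ 1) (hps : psf K P ≤ 1 / 5) (hab : a ≠ b) {s t : KeyRing P K}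
    (hst : ¬ s.Meets t) (l : ℕ) :
    jointDegreeProb (Others a b) (keyedEdgeProb p s t) (p ^ 2 * s.bothProb t) (pef K P p) l ≤
      poissonPairMass (pef K P p * n) l *
        (Real.exp ((4 * l + 4) * pef K P p + 2 * (n * pef K P p ^ 2)) * (1 + 2 * l / n) ^ l) := by
  have hn : (0 : ℝ) < n := by exact_mod_cast a.pos
  have hq0 := pef_pos hKP hK hp0
  have hT := poissonPairMass_pos (mul_pos hq0 hn) l
  have hβ0 := sq_mul_bothProb_nonneg p s t
  have hβ := sq_mul_bothProb_le_of_not_meets hKP p hps hst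
  rw [jointDegreeProb_of_not_meets hst]
  refine (pairProb_le_poissonPairMass ((card_others_add_two hab).trans (Fintype.card_fin n))
    hβ0 (sq_mul_bothProb_le_pef hKP hp0.le hp1 s t) hq0
    (by linarith [pef_le_psf (K := K) (P := P) hp1]) l).trans ?_
  have hexp : n * (p ^ 2 * s.bothProb t) ≤ 2 * (n * pef K P p ^ 2) := by
    linarith [mul_le_mul_of_nonneg_left hβ hn.le]
  have hratio : (l : ℝ) * (p ^ 2 * s.bothProb t) / (n * pef K P p ^ 2) ≤ 2 * l / (n : ℝ) := by
    calc (l : ℝ) * (p ^ 2 * s.bothProb t) / (n * pef K P p ^ 2)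
        ≤ l * (2 * pef K P p ^ 2) / (n * pef K P p ^ 2) := by gcongr
      _ = 2 * l / (n : ℝ) := by field_simp
  rw [mul_comm (Real.exp _)]
  gcongr

lemma jointDegreeProb_le_indicators (hKP : K ≤ P) (hK : 2 ≤ K) (hp0 : 0 < p) (hp1 : p ≤ 1)
    (hps : psf K P ≤ 1 / 5) (hab : a ≠ b) (hu : l / (pef K P p * n) ≤ u) (s t : KeyRing P K) :
    jointDegreeProb (Others a b) (keyedEdgeProb p s t) (p ^ 2 * s.bothProb t) (pef K P p) l ≤
      poissonPairMass (pef K P p * n) l *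
        (Real.exp ((4 * l + 4) * pef K P p + 2 * (n * pef K P p ^ 2)) *
          ((1 + 2 * l / n) ^ l + (1 + u) ^ l * (1 + u ^ 2) *
            (sharedKeyFactor n K P p * (if s.Meets t then 1 else 0) +
              sharedKeyFactor n K P p ^ 2 * (if 2 ≤ #(s.1 ∩ t.1) then 1 else 0)))) := by
  have hK0 : 0 < K := by lia
  have hn : (0 : ℝ) < n := by exact_mod_cast a.pos
  have hT := poissonPairMass_pos (mul_pos (pef_pos hKP hK0 hp0) hn) l
  have hu0 : 0 ≤ u := le_trans (div_nonneg l.cast_nonneg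
    (mul_nonneg (pef_nonneg hp0.le) hn.le)) hu
  have hw : 0 < sharedKeyFactor n K P p := Real.exp_pos _
  have hmain : (0 : ℝ) ≤ (1 + 2 * l / n) ^ l := by positivity
  by_cases hst : s.Meets t
  · by_cases h2 : 2 ≤ #(s.1 ∩ t.1)
    · have hj : (#(s.1 ∩ t.1) : ℝ) ≤ (2 : ℕ) / 2 * K := by
        simpa using (card_le_card inter_subset_left).trans_eq s.2
      refine (jointDegreeProb_le_sharedKeyFactor_pow hKP hK0 hp0 hp1 hps hab hu hj).trans ?_
      rw [if_pos hst, if_pos h2, mul_one, mul_one]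
      gcongr
      refine le_add_of_nonneg_of_le hmain ?_
      gcongr
      linarith
    · have hj : (#(s.1 ∩ t.1) : ℝ) ≤ (1 : ℕ) / 2 * K := by
        have hone : (#(s.1 ∩ t.1) : ℝ) ≤ 1 := by exact_mod_cast (by lia)
        have hK' : (2 : ℝ) ≤ K := by exact_mod_cast hK
        push_cast
        linarith
      refine (jointDegreeProb_le_sharedKeyFactor_pow hKP hK0 hp0 hp1 hps hab hu hj).trans ?_
      rw [if_pos hst, if_neg h2, mul_zero, add_zero, mul_one, pow_one]
      gcongr
      exact le_add_of_nonneg_left hmain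
  · refine (jointDegreeProb_le_of_not_meets hKP hK0 hp0 hp1 hps hab hst l).trans ?_
    gcongr
    exact le_add_of_nonneg_right (by positivity)

lemma gonMeasure_real_degEvent_inter_le (hKP : K ≤ P) (hK : 2 ≤ K) (hp0 : 0 < p) (hp1 : p ≤ 1)
    (hps : psf K P ≤ 1 / 5) (hab : a ≠ b) (hu : l / (pef K P p * n) ≤ u) :
    (gonMeasure n K P p).real (degEvent n K P a l ∩ degEvent n K P b l) ≤
      poissonPairMass (pef K P p * n) l *
        (Real.exp ((4 * l + 4) * pef K P p + 2 * (n * pef K P p ^ 2)) *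
          ((1 + 2 * l / n) ^ l + (1 + u) ^ l * (1 + u ^ 2) *
            (psf K P * sharedKeyFactor n K P p +
              2 * (psf K P * sharedKeyFactor n K P p) ^ 2))) := by
  have := KeyRing.nonempty hKP
  have hn : (0 : ℝ) < n := by exact_mod_cast a.pos
  have hq0 := pef_pos hKP (by lia) hp0
  have hT := poissonPairMass_pos (mul_pos hq0 hn) l
  have hu0 : 0 ≤ u := le_trans (by positivity) hu
  have htwo (s : KeyRing P K) :
      𝔼 t : KeyRing P K, (if 2 ≤ #(s.1 ∩ t.1) then (1 : ℝ) else 0) ≤ 2 * psf K P ^ 2 := by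
    calc 𝔼 t : KeyRing P K, (if 2 ≤ #(s.1 ∩ t.1) then (1 : ℝ) else 0)
        ≤ ((K : ℝ) ^ 2 / P) ^ 2 := KeyRing.expect_two_le_card_inter_le hKP s
      _ ≤ (5 / 4 * psf K P) ^ 2 := by
        gcongr
        exact KeyRing.sq_div_le_psf hKP hps
      _ ≤ 2 * psf K P ^ 2 := by nlinarith [sq_nonneg (psf K P)]
  rw [gonMeasure_real_degEvent_inter hKP hp0.le hp1 hab]
  refine expect_le univ_nonempty fun s _ => (expect_le_expect fun t _ =>
    jointDegreeProb_le_indicators hKP hK hp0 hp1 hps hab hu s t).trans ?_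
  have hmeet : sharedKeyFactor n K P p * psf K P + sharedKeyFactor n K P p ^ 2 *
      𝔼 t : KeyRing P K, (if 2 ≤ #(s.1 ∩ t.1) then (1 : ℝ) else 0) ≤
        psf K P * sharedKeyFactor n K P p + 2 * (psf K P * sharedKeyFactor n K P p) ^ 2 := by
    linarith [mul_le_mul_of_nonneg_left (htwo s) (sq_nonneg (sharedKeyFactor n K P p))]
  simp only [← mul_expect, expect_add_distrib, Fintype.expect_const, KeyRing.expect_meets hKP s]
  gcongr

lemma le_gonMeasure_real_degEvent_inter (hKP : K ≤ P) (hp0 : 0 ≤ p) (hp1 : p ≤ 1)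
    (hps : psf K P ≤ 1 / 5) (hab : a ≠ b) (hl : 2 * l + 2 ≤ n) :
    poissonPairMass (pef K P p * n) l * ((1 - psf K P) *
      (((1 - (2 + 2 * l) / n) * (1 - 2 * pef K P p)) ^ (2 * l) *
        (1 - 4 * (n * pef K P p ^ 2)))) ≤
      (gonMeasure n K P p).real (degEvent n K P a l ∩ degEvent n K P b l) := by
  have := KeyRing.nonempty hKP
  have hq : 2 * pef K P p ≤ 1 := by linarith [pef_le_psf (K := K) (P := P) hp1]
  set c := poissonPairMass (pef K P p * n) l *
    (((1 - (2 + 2 * l) / n) * (1 - 2 * pef K P p)) ^ (2 * l) *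
      (1 - 4 * (n * pef K P p ^ 2))) with hc
  rw [gonMeasure_real_degEvent_inter hKP hp0 hp1 hab]
  refine le_expect univ_nonempty fun s _ => ?_
  calc _ = 𝔼 t, c * (if ¬ s.Meets t then 1 else 0) := by
        rw [← mul_expect, KeyRing.expect_not_meets, hc]
        ring
    _ ≤ _ := by
        refine expect_le_expect fun t _ => ?_
        have hβ0 := sq_mul_bothProb_nonneg p s t
        split_ifs with hst
        · rw [mul_zero]
          exact jointDegreeProb_nonneg (keyedEdgeProb_nonneg hp0 s t)
            (keyedEdgeProb_le_one hp1 s t) hβ0 (sq_mul_bothProb_le_pef hKP hp0 hp1 s t) hq l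
        · rw [mul_one, jointDegreeProb_of_not_meets hst]
          exact poissonPairMass_le_pairProb ((card_others_add_two hab).trans (Fintype.card_fin n))
            hβ0 (sq_mul_bothProb_le_of_not_meets hKP p hps hst) (pef_nonneg hp0) hq hl

end ModelBounds

section Limits

lemma tendsto_natCast_mul_sq_mul_rpow {q : ℕ → ℝ} {a c : ℝ} (hq0 : ∀ n, 0 ≤ q n)
    (hq : ∀ᶠ n : ℕ in atTop, n * q n ≤ c * Real.log n) (ha : a < 1) :
    Tendsto (fun n : ℕ => n * q n ^ 2 * (n : ℝ) ^ a) atTop (nhds 0) := by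
  have hlog : Tendsto (fun n : ℕ => c ^ 2 * (Real.log n ^ 2 / (n : ℝ) ^ (1 - a))) atTop
      (nhds 0) := by
    have h := (isLittleO_log_rpow_rpow_atTop 2 (sub_pos.2 ha)).tendsto_div_nhds_zero
    simpa using (h.comp tendsto_natCast_atTop_atTop).const_mul (c ^ 2)
  refine squeeze_zero' (Eventually.of_forall fun n => by positivity) ?_ hlog
  filter_upwards [hq, eventually_gt_atTop 0] with n hqn hn
  have hn' : (0 : ℝ) < n := by exact_mod_cast hn
  calc n * q n ^ 2 * (n : ℝ) ^ a
      = (n * q n) ^ 2 / (n : ℝ) ^ (1 - a) := by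
        rw [Real.rpow_sub hn', Real.rpow_one]
        field_simp
    _ ≤ (c * Real.log n) ^ 2 / (n : ℝ) ^ (1 - a) := by
        have := mul_nonneg hn'.le (hq0 n)
        gcongr
    _ = c ^ 2 * (Real.log n ^ 2 / (n : ℝ) ^ (1 - a)) := by ring

lemma psf_mul_sharedKeyFactor_le {n K P : ℕ} {p d : ℝ} (hn : 0 < n) (hp0 : 0 ≤ p) (hp1 : p ≤ 1)
    (hps : psf K P ≤ 1 / 5) (hmean : n * pef K P p ≤ d * (1 - psf K P) * Real.log n) :
    psf K P * sharedKeyFactor n K P p ≤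
      psf K P * Real.exp 1 + n * pef K P p ^ 2 * (n : ℝ) ^ (d / 2) := by
  have hn' : (0 : ℝ) < n := by exact_mod_cast hn
  have hσ := KeyRing.psf_nonneg K P
  have hq := pef_nonneg (K := K) (P := P) hp0
  rw [sharedKeyFactor, mul_div_assoc', div_div]
  rcases le_total (n * (p * pef K P p)) 1 with hsmall | hlarge
  · refine le_add_of_le_of_nonneg ?_ (by positivity)
    gcongr
    rw [div_le_one (by linarith)]
    linarith
  · refine le_add_of_nonneg_of_le (by positivity) ?_
    have hpsf : psf K P ≤ n * pef K P p ^ 2 := by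
      calc psf K P ≤ psf K P * (n * (p * pef K P p)) := le_mul_of_one_le_right hσ hlarge
        _ = n * pef K P p ^ 2 := by
          rw [pef]
          ring
    rw [Real.rpow_def_of_pos hn']
    gcongr
    rw [div_le_iff₀ (by linarith)]
    calc n * (p * pef K P p) ≤ n * pef K P p := by
          gcongr
          exact mul_le_of_le_one_left hq hp1
      _ ≤ Real.log n * (d / 2) * ((1 - psf K P) * 2) := by linarith

lemma tendsto_psf_mul_sharedKeyFactor {K P : ℕ → ℕ} {p : ℕ → ℝ} {c : ℝ} (hp0 : ∀ n, 0 ≤ p n)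
    (hp1 : ∀ n, p n ≤ 1) (hps : Tendsto (fun n => psf (K n) (P n)) atTop (nhds 0)) (hc : c < 2)
    (hmean : ∀ᶠ n : ℕ in atTop, n * pef (K n) (P n) (p n) ≤ c * Real.log n) :
    Tendsto (fun n => psf (K n) (P n) * sharedKeyFactor n (K n) (P n) (p n)) atTop (nhds 0) := by
  obtain ⟨d, hcd, hd⟩ := exists_between hc
  have hbound := (hps.mul_const (Real.exp 1)).add (tendsto_natCast_mul_sq_mul_rpow
    (fun n => pef_nonneg (hp0 n)) hmean (show d / 2 < 1 by linarith))
  rw [zero_mul, zero_add] at hbound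
  refine squeeze_zero' (Eventually.of_forall fun n =>
    mul_nonneg (KeyRing.psf_nonneg _ _) (Real.exp_pos _).le) ?_ hbound
  have hcd' : ∀ᶠ n in atTop, c < d * (1 - psf (K n) (P n)) := by
    have h := (hps.const_sub 1).const_mul d
    rw [sub_zero, mul_one] at h
    exact h.eventually_const_lt hcd
  filter_upwards [hmean, hcd', hps.eventually_le_const (show (0 : ℝ) < 1 / 5 by norm_num),
    eventually_gt_atTop 0] with n hmean_n hcd_n hps_n hn
  refine psf_mul_sharedKeyFactor_le hn (hp0 n) (hp1 n) hps_n (hmean_n.trans ?_)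
  exact mul_le_mul_of_nonneg_right hcd_n.le (Real.log_natCast_nonneg n)

lemma tendsto_lowerFactor {ps q : ℕ → ℝ} (hps : Tendsto ps atTop (nhds 0))
    (hq : Tendsto q atTop (nhds 0)) (hnq : Tendsto (fun n : ℕ => n * q n ^ 2) atTop (nhds 0))
    (l : ℕ) :
    Tendsto (fun n : ℕ => (1 - ps n) *
      (((1 - (2 + 2 * l) / n) * (1 - 2 * q n)) ^ (2 * l) * (1 - 4 * (n * q n ^ 2)))) atTop
      (nhds 1) := by
  have hl := (tendsto_const_div_atTop_nhds_zero_nat (2 + 2 * l : ℝ)).const_sub 1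
  simpa using (hps.const_sub 1).mul (((hl.mul ((hq.const_mul 2).const_sub 1)).pow (2 * l)).mul
    ((hnq.const_mul 4).const_sub 1))

lemma tendsto_upperFactor {z q : ℕ → ℝ} (hz : Tendsto z atTop (nhds 0))
    (hq : Tendsto q atTop (nhds 0)) (hnq : Tendsto (fun n : ℕ => n * q n ^ 2) atTop (nhds 0))
    (l : ℕ) (A : ℝ) :
    Tendsto (fun n : ℕ => Real.exp ((4 * l + 4) * q n + 2 * (n * q n ^ 2)) *
      ((1 + 2 * l / n) ^ l + A * (z n + 2 * z n ^ 2))) atTop (nhds 1) := by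
  have hexp := ((hq.const_mul (4 * l + 4 : ℝ)).add (hnq.const_mul 2)).rexp
  have hl := ((tendsto_const_div_atTop_nhds_zero_nat (2 * l : ℝ)).const_add 1).pow l
  simpa using hexp.mul (hl.add ((hz.add ((hz.pow 2).const_mul 2)).const_mul A))

lemma eventually_log_add_le (k : ℕ) {α : ℕ → ℝ} (hα : Tendsto α atTop atBot) :
    ∀ᶠ n : ℕ in atTop, Real.log n + ((k : ℝ) - 1) * Real.log (Real.log n) + α n ≤
      3 / 2 * Real.log n := by
  have hlog : Tendsto (fun n : ℕ => Real.log n) atTop atTop :=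
    Real.tendsto_log_atTop.comp tendsto_natCast_atTop_atTop
  have hloglog := (Real.isLittleO_log_id_atTop.comp_tendsto hlog).const_mul_left ((k : ℝ) - 1)
  filter_upwards [hloglog.bound (show (0 : ℝ) < 1 / 2 by norm_num), hα.eventually_le_atBot 0,
    hlog.eventually_ge_atTop 0] with n hloglog_n hα_n hlog_n
  simp only [Function.comp_apply, id, Real.norm_eq_abs, abs_of_nonneg hlog_n] at hloglog_n
  linarith [le_of_abs_le hloglog_n]

end Limits

theorem gon_joint_degree_asymptotics_general {K P : ℕ → ℕ} {p : ℕ → ℝ} {c : ℝ}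
    (hKP : ∀ n, K n ≤ P n) (hp0 : ∀ n, 0 < p n) (hp1 : ∀ n, p n ≤ 1)
    (hps : Tendsto (fun n : ℕ => psf (K n) (P n)) atTop (nhds 0))
    (hK2 : ∀ᶠ n : ℕ in atTop, 2 ≤ K n) (hc : c < 2)
    (hmean : ∀ᶠ n : ℕ in atTop, n * pef (K n) (P n) (p n) ≤ c * Real.log n)
    {x y : ℕ} (hxy : x ≠ y) {ℓ : ℕ}
    (hℓ : ℓ = 0 ∨ ∃ ε : ℝ, 0 < ε ∧ ∀ᶠ n : ℕ in atTop, ε < n * pef (K n) (P n) (p n)) :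
    Tendsto (fun n : ℕ =>
        (gonMeasure n (K n) (P n) (p n)
            (degEvent n (K n) (P n) x ℓ ∩ degEvent n (K n) (P n) y ℓ)).toReal /
          ((1 / (ℓ.factorial : ℝ) ^ 2) * (pef (K n) (P n) (p n) * (n : ℝ)) ^ (2 * ℓ) *
            Real.exp (-2 * (pef (K n) (P n) (p n) * (n : ℝ)))))
      atTop (nhds 1) := by
  have hq := squeeze_zero (fun n => pef_nonneg (hp0 n).le) (fun n => pef_le_psf (hp1 n)) hps
  have hnq : Tendsto (fun n : ℕ => n * pef (K n) (P n) (p n) ^ 2) atTop (nhds 0) := by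
    simpa using tendsto_natCast_mul_sq_mul_rpow (fun n => pef_nonneg (hp0 n).le) hmean one_pos
  have hz := tendsto_psf_mul_sharedKeyFactor (fun n => (hp0 n).le) hp1 hps hc hmean
  obtain ⟨u, hu⟩ : ∃ u : ℝ, ∀ᶠ n : ℕ in atTop, ℓ / (pef (K n) (P n) (p n) * n) ≤ u := by
    rcases hℓ with rfl | ⟨ε, hε, hεn⟩
    · exact ⟨0, by simp⟩
    · exact ⟨ℓ / ε, hεn.mono fun n hn => by rw [mul_comm]; gcongr⟩
  have hgood : ∀ᶠ n in atTop, 0 < poissonPairMass (pef (K n) (P n) (p n) * n) ℓ ∧ 2 ≤ K n ∧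
      psf (K n) (P n) ≤ 1 / 5 ∧ x < n ∧ y < n := by
    filter_upwards [hK2, hps.eventually_le_const (show (0 : ℝ) < 1 / 5 by norm_num),
      eventually_gt_atTop x, eventually_gt_atTop y] with n hK h5 hx hy
    have hn : (0 : ℝ) < n := by exact_mod_cast x.zero_le.trans_lt hx
    exact ⟨poissonPairMass_pos (mul_pos (pef_pos (hKP n) (by lia) (hp0 n)) hn) ℓ, hK, h5, hx, hy⟩
  refine tendsto_of_tendsto_of_tendsto_of_le_of_le' (tendsto_lowerFactor hps hq hnq ℓ)
    (tendsto_upperFactor hz hq hnq ℓ ((1 + u) ^ ℓ * (1 + u ^ 2))) ?_ ?_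
  · filter_upwards [hgood, eventually_ge_atTop (2 * ℓ + 2)] with n ⟨hT, _, h5, hx, hy⟩ hn
    exact (le_div_iff₀' hT).2 (le_gonMeasure_real_degEvent_inter (a := ⟨x, hx⟩) (b := ⟨y, hy⟩)
      (hKP n) (hp0 n).le (hp1 n) h5 (by simpa using hxy) hn)
  · filter_upwards [hgood, hu] with n ⟨hT, hK, h5, hx, hy⟩ hun
    exact (div_le_iff₀' hT).2 (gonMeasure_real_degEvent_inter_le (a := ⟨x, hx⟩) (b := ⟨y, hy⟩)
      (hKP n) hK (hp0 n) (hp1 n) h5 (by simpa using hxy) hun)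

/-- joint degree asymptotics for two distinct nodes in `𝔾_on`. -/
theorem gon_joint_degree_asymptotics
    (k : ℕ) (hk : 1 ≤ k) (K P : ℕ → ℕ) (p : ℕ → ℝ)
    (hKP : ∀ n, K n ≤ P n) (hp0 : ∀ n, 0 < p n) (hp1 : ∀ n, p n < 1)
    (hps : Tendsto (fun n : ℕ => psf (K n) (P n)) atTop (nhds 0))
    (hK2 : ∀ᶠ n : ℕ in atTop, 2 ≤ K n)
    (α : ℕ → ℝ)
    (hα : ∀ n : ℕ, 1 ≤ n → pef (K n) (P n) (p n) =
      (Real.log n + ((k : ℝ) - 1) * Real.log (Real.log n) + α n) / (n : ℝ))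
    (hαbot : Tendsto α atTop atBot)
    (x y : ℕ) (hxy : x ≠ y) :
    -- (a)
    ((∃ ε : ℝ, 0 < ε ∧ ∀ᶠ n : ℕ in atTop, ε < (n : ℝ) * pef (K n) (P n) (p n)) →
      ∀ ℓ : ℕ, Tendsto (fun n : ℕ =>
          (gonMeasure n (K n) (P n) (p n)
              (degEvent n (K n) (P n) x ℓ ∩ degEvent n (K n) (P n) y ℓ)).toReal /
            ((1 / (ℓ.factorial : ℝ) ^ 2) * (pef (K n) (P n) (p n) * (n : ℝ)) ^ (2 * ℓ) *
              Real.exp (-2 * (pef (K n) (P n) (p n) * (n : ℝ)))))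
        atTop (nhds 1)) ∧
    -- (b)
    Tendsto (fun n : ℕ =>
        (gonMeasure n (K n) (P n) (p n)
            (degEvent n (K n) (P n) x 0 ∩ degEvent n (K n) (P n) y 0)).toReal /
          Real.exp (-2 * (pef (K n) (P n) (p n) * (n : ℝ))))
      atTop (nhds 1) := by
  have hmean : ∀ᶠ n : ℕ in atTop, n * pef (K n) (P n) (p n) ≤ 3 / 2 * Real.log n := by
    filter_upwards [eventually_log_add_le k hαbot, eventually_ge_atTop 1] with n hle hn
    rwa [hα n hn, mul_div_cancel₀ _ (by positivity)]
  have key {ℓ : ℕ} := gon_joint_degree_asymptotics_general (ℓ := ℓ) hKP hp0 (fun n => (hp1 n).le)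
    hps hK2 (by norm_num) hmean hxy
  exact ⟨fun hε ℓ => key (.inr hε), by simpa using key (.inl rfl)⟩
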